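/- arXiv:2604.10682 — 2 statements merged into one kernel-verified Lean document; each statement's English description precedes it below -/
import Mathlib

section
/- Let d ≥ 1 be an integer, σ > −d a real number, and ε ∈ (0,1). Suppose m : ℝ^d → ℂ is (d+2)-times continuously differentiable on ℝ^d \ {0} with |∇^k m(ξ)| ≤ |ξ|^{σ−k} for all integers 0 ≤ k ≤ d+2 and all ξ ≠ 0. Let v : ℝ^d → ℂ be a measurable function with ∫_{ℝ^d} (|ξ|^{σ−ε} + |ξ|^{σ+ε}) |v(ξ)| dξ < ∞, and define T(x) := ∫_{ℝ^d} m(ξ) v(ξ) e^{i x·ξ} dξ, Λ₊(x) := ∫_{ℝ^d} |ξ|^{σ+ε} v(ξ) e^{i x·ξ} dξ, Λ₋(x) := ∫_{ℝ^d} |ξ|^{σ−ε} v(ξ) e^{i x·ξ} dξ. Then there is a constant C depending only on d, σ and ε such that sup_x |T(x)| ≤ C (sup_x |Λ₊(x)|)^{1/2} (sup_x |Λ₋(x)|)^{1/2}. -/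
open MeasureTheory Set
open scoped InnerProductSpace

/-!
Fix a smooth cutoff `χ` equal to `1` near the origin and put `ψ = χ - χ(2 ·)`. For a symbol `m` of
order `σ`, the functions `m(ξ) |ξ|^{-s} ψ(aξ)` are, after rescaling by `a` and factoring out
`a^{s-σ}`, supported in a fixed annulus and bounded in `C^N` uniformly in `m` and `a`. For `N`
larger than the dimension their inverse Fourier transforms are bounded in `L¹`, so the dyadic piece
of `m v` at frequency `|ξ| ~ 1/a` is `O(a^{s-σ})` times the sup norm of the inverse transform of
`|ξ|^s v`. Using `s = σ + ε` at high frequencies and `s = σ - ε` at low frequencies gives two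
geometric series, and optimising the crossover scale gives the geometric mean.
-/

open Filter Module
open scoped Topology FourierTransform

section FourierDecay

variable {V E : Type*} [NormedAddCommGroup V] [InnerProductSpace ℝ V] [FiniteDimensional ℝ V]
  [MeasurableSpace V] [BorelSpace V] [NormedAddCommGroup E] [NormedSpace ℂ E]

lemma pow_norm_mul_norm_fourier_le {N : ℕ} {g : V → E} (hg : ContDiff ℝ N g)
    (hint : ∀ k ≤ N, Integrable (iteratedFDeriv ℝ k g)) {A : ℝ}
    (hA : ∀ k ≤ N, ∫ η, ‖iteratedFDeriv ℝ k g η‖ ≤ A) {j : ℕ} (hj : j ≤ N) (y : V) :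
    ‖y‖ ^ j * ‖𝓕 g y‖ ≤ 2 ^ j * (j + 1) * A := by
  have hdecay := Real.pow_mul_norm_iteratedFDeriv_fourier_le (f := g) (K := 0) (N := (N : ℕ∞))
    (mod_cast hg) (fun k n hk hn => by
      obtain rfl : k = 0 := by simpa using hk
      simpa only [pow_zero, one_mul] using (hint n (mod_cast hn)).norm)
    (k := 0) (n := j) le_rfl (mod_cast hj) y
  have hsum : ∑ i ∈ Finset.range (j + 1), ∫ η, ‖iteratedFDeriv ℝ i g η‖ ≤ (j + 1) * A := by
    simpa using Finset.sum_le_card_nsmul (Finset.range (j + 1)) _ A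
      fun i hi => hA i ((Finset.mem_range_succ_iff.1 hi).trans hj)
  calc ‖y‖ ^ j * ‖𝓕 g y‖ ≤ 2 ^ j * ∑ i ∈ Finset.range (j + 1), ∫ η, ‖iteratedFDeriv ℝ i g η‖ := by
        simpa using hdecay
    _ ≤ 2 ^ j * ((j + 1) * A) := by gcongr
    _ = 2 ^ j * (j + 1) * A := by ring

lemma continuous_fourier_of_integrable {g : V → E} (hg : Integrable g) : Continuous (𝓕 g) :=
  VectorFourier.fourierIntegral_continuous Real.continuous_fourierChar
    (by exact continuous_inner) hg

lemma exists_integral_norm_fourier_le {N : ℕ} (hN : finrank ℝ V < N) :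
    ∃ K : ℝ, ∀ (g : V → E) (A : ℝ), ContDiff ℝ N g →
      (∀ k ≤ N, Integrable (iteratedFDeriv ℝ k g)) →
      (∀ k ≤ N, ∫ η, ‖iteratedFDeriv ℝ k g η‖ ≤ A) →
      Integrable (𝓕 g) ∧ ∫ y, ‖𝓕 g y‖ ≤ K * A := by
  refine ⟨2 ^ N * (1 + 2 ^ N * (N + 1)) * ∫ y : V, (1 + ‖y‖) ^ (-(N : ℝ)),
    fun g A hg hint hA => ?_⟩
  have hweight : Integrable fun y : V => (1 + ‖y‖) ^ (-(N : ℝ)) :=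
    integrable_one_add_norm (mod_cast hN)
  have hdecay (y : V) :
      ‖𝓕 g y‖ ≤ 2 ^ N * (A + 2 ^ N * (N + 1) * A) * (1 + ‖y‖) ^ (-(N : ℝ)) := by
    have h0 := pow_norm_mul_norm_fourier_le hg hint hA N.zero_le y
    have hN := pow_norm_mul_norm_fourier_le hg hint hA le_rfl y
    simpa using pow_mul_le_of_le_of_pow_mul_le (k := 0) (norm_nonneg y) (norm_nonneg (𝓕 g y))
      (C₁ := A) (by simpa using h0) (by simpa using hN)
  have hgint : Integrable g := by
    simpa using (integrable_norm_iff hg.continuous.aestronglyMeasurable).1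
      (by simpa using (hint 0 N.zero_le).norm)
  have hFint : Integrable (𝓕 g) := (hweight.const_mul _).mono'
    (continuous_fourier_of_integrable hgint).aestronglyMeasurable (.of_forall hdecay)
  refine ⟨hFint, (integral_mono hFint.norm (hweight.const_mul _) hdecay).trans_eq ?_⟩
  rw [integral_const_mul]
  ring

lemma exists_integral_norm_fourier_le_of_tsupport_subset {S : Set V} (hS : IsCompact S) {N : ℕ}
    (hN : finrank ℝ V < N) :
    ∃ K : ℝ, ∀ (g : V → E) (B : ℝ), ContDiff ℝ N g → tsupport g ⊆ S →
      (∀ k ≤ N, ∀ η, ‖iteratedFDeriv ℝ k g η‖ ≤ B) →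
      Integrable (𝓕 g) ∧ ∫ y, ‖𝓕 g y‖ ≤ K * B := by
  obtain ⟨K, hK⟩ := exists_integral_norm_fourier_le (V := V) (E := E) hN
  refine ⟨K * volume.real S, fun g B hg hgS hB => ?_⟩
  have hcont (k : ℕ) (hk : k ≤ N) : Continuous (iteratedFDeriv ℝ k g) :=
    hg.continuous_iteratedFDeriv (mod_cast hk)
  have hcompact : HasCompactSupport g := hS.of_isClosed_subset (isClosed_tsupport g) hgS
  have hint (k : ℕ) (hk : k ≤ N) : Integrable (iteratedFDeriv ℝ k g) :=
    (hcont k hk).integrable_of_hasCompactSupport (hcompact.iteratedFDeriv k)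
  rw [mul_assoc]
  refine hK g _ hg hint fun k hk => ?_
  calc ∫ η, ‖iteratedFDeriv ℝ k g η‖ = ∫ η in S, ‖iteratedFDeriv ℝ k g η‖ := by
        refine (setIntegral_eq_integral_of_forall_compl_eq_zero fun η hη => ?_).symm
        rw [image_eq_zero_of_notMem_tsupport
          fun h => hη (hgS (tsupport_iteratedFDeriv_subset k h)), norm_zero]
    _ ≤ ∫ _ in S, B := integral_mono (hint k hk).norm.integrableOn
        (integrableOn_const hS.measure_lt_top.ne) (hB k hk)
    _ = volume.real S * B := by simp

end FourierDecay

section FourierInversion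

variable {V E : Type*} [NormedAddCommGroup V] [InnerProductSpace ℝ V] [FiniteDimensional ℝ V]
  [MeasurableSpace V] [BorelSpace V] [NormedAddCommGroup E] [NormedSpace ℂ E]

lemma fourierInv_sub_apply {u w : V → E} (hu : Integrable u) (hw : Integrable w) (x : V) :
    𝓕⁻ (fun ξ => u ξ - w ξ) x = 𝓕⁻ u x - 𝓕⁻ w x := by
  have hphase {f : V → E} (hf : Integrable f) : Integrable fun ξ => 𝐞 ⟪ξ, x⟫_ℝ • f ξ := by
    simpa using (Real.fourierIntegral_convergent_iff (μ := volume) (-x)).2 hf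
  simp_rw [Real.fourierInv_eq, smul_sub]
  exact integral_sub (hphase hu) (hphase hw)

lemma norm_fourierInv_const_smul {c : ℝ} (u : V → E) (x : V) :
    ‖𝓕⁻ (fun ξ => c • u ξ) x‖ = |c| * ‖𝓕⁻ u x‖ := by
  simp_rw [Real.fourierInv_eq, smul_comm _ c]
  rw [integral_smul, norm_smul, Real.norm_eq_abs]

lemma fourierInv_comp_smul_smul_eq_integral [CompleteSpace E] {g : V → ℂ} (hgc : Continuous g)
    (hg : Integrable g) (hFg : Integrable (𝓕 g)) {u : V → E} (hu : Integrable u) (t : ℝ) (x : V) :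
    𝓕⁻ (fun ξ => g (t • ξ) • u ξ) x = ∫ y, 𝓕 g y • 𝓕⁻ u (x + t • y) := by
  have hinversion (ξ : V) : 𝐞 ⟪ξ, x⟫_ℝ • g (t • ξ) • u ξ =
      ∫ y, 𝓕 g y • 𝐞 ⟪ξ, x + t • y⟫_ℝ • u ξ := by
    have : g (t • ξ) = ∫ y, 𝐞 ⟪y, t • ξ⟫_ℝ • 𝓕 g y := by
      rw [← Real.fourierInv_eq, hgc.fourierInv_fourier_eq hg hFg]
    rw [this, ← integral_smul_const, Circle.smul_def, ← integral_smul]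
    refine integral_congr_ae (.of_forall fun y => ?_)
    simp only [inner_add_right, inner_smul_right, real_inner_comm ξ y, AddChar.map_add_eq_mul,
      Circle.smul_def, Circle.coe_mul, smul_smul, smul_eq_mul]
    ring_nf
  have hint : Integrable (fun p : V × V => 𝓕 g p.2 • 𝐞 ⟪p.1, x + t • p.2⟫_ℝ • u p.1)
      (volume.prod volume) := by
    have hphase : Continuous fun p : V × V => (𝐞 ⟪p.1, x + t • p.2⟫_ℝ : ℂ) := by fun_prop
    have := (hFg.smul_prod hu).swap.bdd_smul 1 hphase.aestronglyMeasurable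
      (.of_forall fun p => (Circle.norm_coe _).le)
    exact this.congr (.of_forall fun p => smul_comm _ (𝓕 g p.2) (u p.1))
  simp_rw [Real.fourierInv_eq, hinversion]
  rw [integral_integral_swap hint]
  simp_rw [integral_smul]

lemma norm_fourierInv_comp_smul_smul_le [CompleteSpace E] {g : V → ℂ} (hgc : Continuous g)
    (hg : Integrable g) (hFg : Integrable (𝓕 g)) {u : V → E} (hu : Integrable u) {M : ℝ}
    (hM : ∀ x, ‖𝓕⁻ u x‖ ≤ M) (t : ℝ) (x : V) :
    ‖𝓕⁻ (fun ξ => g (t • ξ) • u ξ) x‖ ≤ (∫ y, ‖𝓕 g y‖) * M := by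
  rw [fourierInv_comp_smul_smul_eq_integral hgc hg hFg hu, ← integral_mul_const]
  refine norm_integral_le_of_norm_le (hFg.norm.mul_const M) (.of_forall fun y => ?_)
  rw [norm_smul]
  gcongr
  exact hM _

lemma forall_norm_fourierInv_le_iff {u : V → ℂ} {M : ℝ} :
    (∀ x, ‖𝓕⁻ u x‖ ≤ M) ↔
      ∀ x, ‖∫ ξ, u ξ * Complex.exp ((⟪x, ξ⟫_ℝ : ℂ) * Complex.I)‖ ≤ M := by
  have hscale (x : V) : 𝓕⁻ u x =
      ∫ ξ, u ξ * Complex.exp ((⟪(2 * Real.pi) • x, ξ⟫_ℝ : ℂ) * Complex.I) := by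
    simp_rw [Real.fourierInv_eq', real_inner_smul_left, real_inner_comm, smul_eq_mul,
      mul_comm (u _)]
  simp_rw [hscale]
  exact ((MulAction.surjective₀ Real.two_pi_pos.ne').forall
    (p := fun x => ‖∫ ξ, u ξ * Complex.exp ((⟪x, ξ⟫_ℝ : ℂ) * Complex.I)‖ ≤ M)).symm

end FourierInversion

section Symbols

variable {V : Type*} [NormedAddCommGroup V] [NormedSpace ℝ V]

/-- Multiplier symbols of order `σ` with `N` controlled derivatives, as in the Hörmander–Mikhlin
theorem, with all constants in the symbol estimates normalised to `1`. -/
structure IsMikhlinSymbol (N : ℕ) (σ : ℝ) (m : V → ℂ) : Prop where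
  contDiffOn : ContDiffOn ℝ N m {0}ᶜ
  norm_iteratedFDerivWithin_le : ∀ k ≤ N, ∀ ξ ≠ 0,
    ‖iteratedFDerivWithin ℝ k m {0}ᶜ ξ‖ ≤ ‖ξ‖ ^ (σ - (k : ℝ))

lemma IsMikhlinSymbol.norm_le {N : ℕ} {σ : ℝ} {m : V → ℂ} (hm : IsMikhlinSymbol N σ m) {ξ : V}
    (hξ : ξ ≠ 0) : ‖m ξ‖ ≤ ‖ξ‖ ^ σ := by
  simpa using hm.norm_iteratedFDerivWithin_le 0 N.zero_le ξ hξ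

lemma IsMikhlinSymbol.rpow_smul_comp_smul {N : ℕ} {σ : ℝ} {m : V → ℂ} (hm : IsMikhlinSymbol N σ m)
    {t : ℝ} (ht : 0 < t) : IsMikhlinSymbol N σ fun η => t ^ (-σ) • m (t • η) := by
  set G : V →L[ℝ] V := t • ContinuousLinearMap.id ℝ V
  have hopen : IsOpen ({0}ᶜ : Set V) := isOpen_compl_singleton
  have hpre : G ⁻¹' {0}ᶜ = {0}ᶜ := by ext; simp [G, ht.ne']
  have hG : ‖G‖ ≤ t := G.opNorm_le_bound ht.le fun η => by simp [G, norm_smul, abs_of_pos ht]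
  have hcomp : ContDiffOn ℝ N (m ∘ G) {0}ᶜ := hpre ▸ hm.contDiffOn.comp_continuousLinearMap G
  refine ⟨hcomp.const_smul _, fun k hk ξ hξ => ?_⟩
  have hGξ : G ξ ∈ ({0}ᶜ : Set V) := by rwa [← mem_preimage, hpre]
  have hchain : iteratedFDerivWithin ℝ k (m ∘ G) {0}ᶜ ξ =
      (iteratedFDerivWithin ℝ k m {0}ᶜ (G ξ)).compContinuousLinearMap fun _ => G := by
    simpa only [hpre] using G.iteratedFDerivWithin_comp_right hm.contDiffOn hopen.uniqueDiffOn
      (by rw [hpre]; exact hopen.uniqueDiffOn) hGξ (mod_cast hk)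
  have hbound : ‖iteratedFDerivWithin ℝ k (m ∘ G) {0}ᶜ ξ‖ ≤ (t * ‖ξ‖) ^ (σ - (k : ℝ)) * t ^ k := by
    rw [hchain]
    refine (ContinuousMultilinearMap.norm_compContinuousLinearMap_le _ _).trans ?_
    simp only [Finset.prod_const, Finset.card_univ, Fintype.card_fin]
    gcongr
    simpa [G, norm_smul, abs_of_pos ht] using hm.norm_iteratedFDerivWithin_le k hk (G ξ) hGξ
  calc ‖iteratedFDerivWithin ℝ k (t ^ (-σ) • (m ∘ G)) {0}ᶜ ξ‖
      = t ^ (-σ) * ‖iteratedFDerivWithin ℝ k (m ∘ G) {0}ᶜ ξ‖ := by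
        rw [iteratedFDerivWithin_const_smul_apply ((hcomp.of_le (mod_cast hk)) ξ hξ)
          hopen.uniqueDiffOn hξ, norm_smul, Real.norm_of_nonneg (by positivity)]
    _ ≤ t ^ (-σ) * ((t * ‖ξ‖) ^ (σ - (k : ℝ)) * t ^ k) := by gcongr
    _ = ‖ξ‖ ^ (σ - (k : ℝ)) * (t ^ (-σ) * t ^ (σ - (k : ℝ)) * t ^ (k : ℝ)) := by
        rw [Real.mul_rpow ht.le (norm_nonneg ξ), Real.rpow_natCast]
        ring
    _ = ‖ξ‖ ^ (σ - (k : ℝ)) := by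
        rw [← Real.rpow_add ht, ← Real.rpow_add ht, show -σ + (σ - k) + k = 0 by ring,
          Real.rpow_zero, mul_one]

lemma contDiff_mul_of_contDiffOn_compl_zero {𝕜 : Type*} [NormedRing 𝕜] [NormedAlgebra ℝ 𝕜]
    {n : WithTop ℕ∞} {f w : V → 𝕜} (hf : ContDiffOn ℝ n f {0}ᶜ) (hw : ContDiff ℝ n w)
    (h0 : (0 : V) ∉ tsupport w) : ContDiff ℝ n fun η => f η * w η := by
  refine contDiff_iff_contDiffAt.2 fun η => ?_
  rcases eq_or_ne η 0 with rfl | hη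
  · refine (contDiffAt_const (c := 0)).congr_of_eventuallyEq ?_
    filter_upwards [notMem_tsupport_iff_eventuallyEq.1 h0] with η hη
    rw [hη, Pi.zero_apply, mul_zero]
  · exact (hf.contDiffAt (isOpen_compl_singleton.mem_nhds hη)).mul hw.contDiffAt

lemma IsMikhlinSymbol.norm_iteratedFDeriv_mul_le {N : ℕ} {σ : ℝ} {m : V → ℂ}
    (hm : IsMikhlinSymbol N σ m) {w : V → ℂ} (hw : ContDiff ℝ N w) {k : ℕ} (hk : k ≤ N) {η : V}
    (hη : η ≠ 0) : ‖iteratedFDeriv ℝ k (fun η => m η * w η) η‖ ≤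
      ∑ i ∈ Finset.range (k + 1),
        (k.choose i : ℝ) * ‖η‖ ^ (σ - (i : ℝ)) * ‖iteratedFDeriv ℝ (k - i) w η‖ := by
  have hopen : IsOpen ({0}ᶜ : Set V) := isOpen_compl_singleton
  rw [← iteratedFDerivWithin_of_isOpen k hopen hη]
  refine (norm_iteratedFDerivWithin_mul_le hm.contDiffOn hw.contDiffOn hopen.uniqueDiffOn hη
    (mod_cast hk)).trans (Finset.sum_le_sum fun i hi => ?_)
  rw [iteratedFDerivWithin_of_isOpen (f := w) _ hopen hη]
  gcongr
  exact hm.norm_iteratedFDerivWithin_le i ((Finset.mem_range_succ_iff.1 hi).trans hk) η hη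

lemma exists_norm_iteratedFDeriv_mul_le (N : ℕ) (σ : ℝ) {w : V → ℂ} (hw : ContDiff ℝ N w)
    (hcompact : HasCompactSupport w) (h0 : (0 : V) ∉ tsupport w) :
    ∃ B : ℝ, ∀ m, IsMikhlinSymbol N σ m → ∀ k ≤ N, ∀ η,
      ‖iteratedFDeriv ℝ k (fun η => m η * w η) η‖ ≤ B := by
  have hne {η : V} (hη : η ∈ tsupport w) : η ≠ 0 := ne_of_mem_of_not_mem hη h0
  have hbound (k : ℕ) (hk : k ≤ N) : ∃ B : ℝ, ∀ m, IsMikhlinSymbol N σ m → ∀ η ∈ tsupport w,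
      ‖iteratedFDeriv ℝ k (fun η => m η * w η) η‖ ≤ B := by
    have hcont : ContinuousOn (fun η => ∑ i ∈ Finset.range (k + 1),
        (k.choose i : ℝ) * ‖η‖ ^ (σ - (i : ℝ)) * ‖iteratedFDeriv ℝ (k - i) w η‖) (tsupport w) := by
      refine continuousOn_finsetSum _ fun i _ => .mul (.mul continuousOn_const ?_) ?_
      · exact continuousOn_id.norm.rpow_const fun η hη => .inl (norm_ne_zero_iff.2 (hne hη))
      · exact (hw.continuous_iteratedFDeriv (mod_cast (by omega : k - i ≤ N))).norm.continuousOn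
    obtain ⟨B, hB⟩ := hcompact.isCompact.exists_bound_of_continuousOn hcont
    exact ⟨B, fun m hm η hη => (hm.norm_iteratedFDeriv_mul_le hw hk (hne hη)).trans
      ((le_abs_self _).trans (hB η hη))⟩
  choose! B hB using hbound
  obtain ⟨M, hM⟩ := ((Finset.range (N + 1)).image B).exists_le
  refine ⟨max M 0, fun m hm k hk η => ?_⟩
  by_cases hη : η ∈ tsupport w
  · exact (hB k hk m hm η hη).trans <|
      (hM _ (Finset.mem_image_of_mem B (Finset.mem_range_succ_iff.2 hk))).trans (le_max_left _ _)
  · have : η ∉ tsupport (iteratedFDeriv ℝ k fun η => m η * w η) := fun h =>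
      hη (tsupport_mul_subset_right (tsupport_iteratedFDeriv_subset k h))
    rw [image_eq_zero_of_notMem_tsupport this, norm_zero]
    exact le_max_right _ _

lemma IsMikhlinSymbol.aestronglyMeasurable [MeasurableSpace V] [BorelSpace V] {μ : Measure V}
    [NullSingletonClass μ] {N : ℕ} {σ : ℝ} {m : V → ℂ} (hm : IsMikhlinSymbol N σ m) :
    AEStronglyMeasurable m μ := by
  simpa using hm.contDiffOn.continuousOn.aestronglyMeasurable (μ := μ)
    (measurableSet_singleton (0 : V)).compl

lemma contDiffOn_norm_rpow {V : Type*} [NormedAddCommGroup V] [InnerProductSpace ℝ V]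
    (n : WithTop ℕ∞) (s : ℝ) : ContDiffOn ℝ n (fun η : V => ‖η‖ ^ s) {0}ᶜ := fun _ hη =>
  ((contDiffAt_norm ℝ hη).rpow_const_of_ne (norm_ne_zero_iff.2 hη)).contDiffWithinAt

end Symbols

section Integrability

lemma rpow_le_rpow_sub_add_rpow_add {r : ℝ} (hr : 0 < r) (σ : ℝ) {ε : ℝ} (hε : 0 ≤ ε) :
    r ^ σ ≤ r ^ (σ - ε) + r ^ (σ + ε) := by
  rcases le_total r 1 with h | h
  · exact (Real.rpow_le_rpow_of_exponent_ge hr h (by linarith)).trans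
      (le_add_of_nonneg_right (by positivity))
  · exact (Real.rpow_le_rpow_of_exponent_le h (by linarith)).trans
      (le_add_of_nonneg_left (by positivity))

lemma integrable_smul_of_norm_le_of_ne {V E 𝕜 : Type*} [MeasurableSpace V] {μ : Measure V}
    [NullSingletonClass μ] [NormedAddCommGroup E] [NormedField 𝕜] [NormedSpace 𝕜 E] {f : V → 𝕜}
    {v : V → E} {W : V → ℝ} {p : V} (hf : AEStronglyMeasurable f μ)
    (hv : AEStronglyMeasurable v μ) (hle : ∀ ξ ≠ p, ‖f ξ‖ ≤ W ξ)
    (hint : Integrable (fun ξ => W ξ * ‖v ξ‖) μ) : Integrable (fun ξ => f ξ • v ξ) μ := by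
  refine hint.mono' (hf.smul hv) ?_
  filter_upwards [Measure.ae_ne μ p] with ξ hξ
  rw [norm_smul]
  gcongr
  exact hle ξ hξ

lemma integrable_norm_rpow_smul {V E : Type*} [NormedAddCommGroup V] [MeasurableSpace V]
    [OpensMeasurableSpace V] {μ : Measure V} [NormedAddCommGroup E] [NormedSpace ℝ E] {v : V → E}
    {W : V → ℝ} {s : ℝ} (hv : AEStronglyMeasurable v μ) (hle : ∀ ξ, ‖ξ‖ ^ s ≤ W ξ)
    (hint : Integrable (fun ξ => W ξ * ‖v ξ‖) μ) : Integrable (fun ξ => ‖ξ‖ ^ s • v ξ) μ := by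
  refine hint.mono' ((measurable_norm.pow_const s).aestronglyMeasurable.smul hv)
    (.of_forall fun ξ => ?_)
  rw [norm_smul, Real.norm_of_nonneg (by positivity)]
  gcongr
  exact hle ξ

end Integrability

section Telescoping

lemma le_two_mul_sqrt_mul_sqrt_of_forall_pos {x p q : ℝ} (hp : 0 ≤ p) (hq : 0 ≤ q)
    (h : ∀ t > 0, x ≤ p * t + q * t⁻¹) : x ≤ 2 * (√p * √q) := by
  rcases le_total x 0 with hx | hx
  · exact hx.trans (by positivity)
  -- For `t ≤ 0` every term of `p t² - x t + q` is nonnegative.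
  have hdiscrim : discrim p (-x) q ≤ 0 := discrim_le_zero fun t => by
    rcases le_or_gt t 0 with ht | ht
    · nlinarith [mul_nonneg hp (mul_self_nonneg t), mul_nonneg hx (neg_nonneg.2 ht)]
    · have := mul_le_mul_of_nonneg_right (h t ht) ht.le
      field_simp at this
      linarith
  rw [discrim] at hdiscrim
  refine le_of_sq_le_sq ?_ (by positivity)
  rw [mul_pow, mul_pow, Real.sq_sqrt hp, Real.sq_sqrt hq]
  linarith

lemma norm_sub_le_of_geometric_differences {E : Type*} [NormedAddCommGroup E] {I : ℝ → E} {L : E}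
    {A q e : ℝ} (hq : 0 < q) (hqe : q ^ e < 1) (h : ∀ a > 0, ‖I a - I (q * a)‖ ≤ A * a ^ e) {a : ℝ}
    (ha : 0 < a) (hlim : Tendsto (fun n : ℕ => I (q ^ n * a)) atTop (𝓝 L)) :
    ‖I a - L‖ ≤ A * a ^ e / (1 - q ^ e) := by
  have hstep (n : ℕ) : dist (I (q ^ n * a)) (I (q ^ (n + 1) * a)) ≤ A * a ^ e * (q ^ e) ^ n := by
    calc dist (I (q ^ n * a)) (I (q ^ (n + 1) * a))
        = ‖I (q ^ n * a) - I (q * (q ^ n * a))‖ := by rw [dist_eq_norm, pow_succ', mul_assoc]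
      _ ≤ A * (q ^ n * a) ^ e := h _ (by positivity)
      _ = A * a ^ e * (q ^ e) ^ n := by
        rw [Real.mul_rpow (by positivity) ha.le, Real.rpow_pow_comm hq.le]
        ring
  simpa [dist_eq_norm] using dist_le_of_le_geometric_of_tendsto₀ _ _ hqe hstep hlim

lemma norm_le_of_dyadic_differences {E : Type*} [NormedAddCommGroup E] {I : ℝ → E} {L : E}
    {A B ε : ℝ} (hε : 0 < ε) (hA : ∀ a > 0, ‖I a - I (2 * a)‖ ≤ A * a ^ ε)
    (hB : ∀ a > 0, ‖I a - I (2 * a)‖ ≤ B * a ^ (-ε)) (hzero : Tendsto I (𝓝 0) (𝓝 L))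
    (htop : Tendsto I atTop (𝓝 0)) : ‖L‖ ≤ 2 / (1 - 2 ^ (-ε)) * (√A * √B) := by
  have hA0 : 0 ≤ A := by simpa using (norm_nonneg _).trans (hA 1 one_pos)
  have hB0 : 0 ≤ B := by simpa using (norm_nonneg _).trans (hB 1 one_pos)
  have hratio : (2 : ℝ) ^ (-ε) < 1 :=
    Real.rpow_lt_one_of_one_lt_of_neg one_lt_two (neg_lt_zero.2 hε)
  have hhalf : (2⁻¹ : ℝ) ^ ε = 2 ^ (-ε) := by
    rw [Real.inv_rpow zero_le_two, Real.rpow_neg zero_le_two]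
  have hlow (a : ℝ) (ha : 0 < a) : ‖I a - L‖ ≤ A * a ^ ε / (1 - 2 ^ (-ε)) := by
    rw [← hhalf]
    refine norm_sub_le_of_geometric_differences (by norm_num) (hhalf ▸ hratio) (fun b hb => ?_) ha
      (hzero.comp ?_)
    · calc ‖I b - I (2⁻¹ * b)‖ = ‖I (2⁻¹ * b) - I (2 * (2⁻¹ * b))‖ := by
            rw [mul_inv_cancel_left₀ two_ne_zero, norm_sub_rev]
        _ ≤ A * (2⁻¹ * b) ^ ε := hA _ (by positivity)
        _ ≤ A * b ^ ε := by gcongr; linarith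
    · simpa using (tendsto_pow_atTop_nhds_zero_of_lt_one (r := (2⁻¹ : ℝ)) (by norm_num)
        (by norm_num)).mul_const a
  have hhigh (a : ℝ) (ha : 0 < a) : ‖I a‖ ≤ B * a ^ (-ε) / (1 - 2 ^ (-ε)) := by
    simpa using norm_sub_le_of_geometric_differences two_pos hratio hB ha
      (htop.comp ((tendsto_pow_atTop_atTop_of_one_lt one_lt_two).atTop_mul_const ha))
  have hsplit (t : ℝ) (ht : 0 < t) : (1 - 2 ^ (-ε)) * ‖L‖ ≤ A * t + B * t⁻¹ := by
    have ha : 0 < t ^ ε⁻¹ := by positivity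
    have := (norm_le_norm_add_norm_sub (I (t ^ ε⁻¹)) L).trans (add_le_add (hhigh _ ha) (hlow _ ha))
    rw [← add_div, le_div_iff₀ (by linarith), Real.rpow_neg ha.le, Real.rpow_inv_rpow ht.le hε.ne']
      at this
    linarith
  have := le_two_mul_sqrt_mul_sqrt_of_forall_pos hA0 hB0 hsplit
  rw [div_mul_eq_mul_div, le_div_iff₀ (by linarith)]
  linarith

end Telescoping

section Cutoffs

variable {V : Type*} [NormedAddCommGroup V] [NormedSpace ℝ V]

lemma tendsto_comp_smul_atTop_of_hasCompactSupport {χ : V → ℝ} (hcompact : HasCompactSupport χ)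
    {ξ : V} (hξ : ξ ≠ 0) : Tendsto (fun a : ℝ => χ (a • ξ)) atTop (𝓝 0) := by
  have hnorm : Tendsto (fun a : ℝ => ‖a • ξ‖) atTop atTop := by
    simp_rw [norm_smul]
    exact tendsto_norm_atTop_atTop.atTop_mul_const (norm_pos_iff.2 hξ)
  exact hcompact.is_zero_at_infty.comp
    ((tendsto_norm_atTop_iff_cobounded.1 hnorm).mono_right Metric.cobounded_le_cocompact)

lemma zero_notMem_tsupport_sub_comp_two_smul {χ : V → ℝ} (hχ : χ =ᶠ[𝓝 0] 1) :
    (0 : V) ∉ tsupport fun η => χ η - χ ((2 : ℝ) • η) := by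
  have hscale : Tendsto (fun η : V => (2 : ℝ) • η) (𝓝 0) (𝓝 0) :=
    (continuous_const_smul (2 : ℝ)).tendsto' 0 0 (smul_zero _)
  rw [notMem_tsupport_iff_eventuallyEq]
  filter_upwards [hχ, hscale.eventually hχ] with η h1 h2
  simp [h1, h2]

end Cutoffs

section DyadicPieces

variable {V E : Type*} [NormedAddCommGroup V] [InnerProductSpace ℝ V] [FiniteDimensional ℝ V]
  [MeasurableSpace V] [BorelSpace V] [NormedAddCommGroup E] [NormedSpace ℂ E]

lemma exists_norm_fourierInv_symbol_comp_smul_le [CompleteSpace E] {N : ℕ} (hN : finrank ℝ V < N)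
    (σ : ℝ) {w : V → ℂ} (hw : ContDiff ℝ N w) (hcompact : HasCompactSupport w)
    (h0 : (0 : V) ∉ tsupport w) :
    ∃ C > 0, ∀ m, IsMikhlinSymbol N σ m → ∀ u : V → E, Integrable u →
      ∀ M, (∀ x, ‖𝓕⁻ u x‖ ≤ M) → ∀ (a : ℝ) (x : V),
        ‖𝓕⁻ (fun ξ => (m (a • ξ) * w (a • ξ)) • u ξ) x‖ ≤ C * M := by
  obtain ⟨B, hB⟩ := exists_norm_iteratedFDeriv_mul_le N σ hw hcompact h0
  obtain ⟨K, hK⟩ := exists_integral_norm_fourier_le_of_tsupport_subset (E := ℂ)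
    hcompact.isCompact hN
  refine ⟨max (K * B) 1, by positivity, fun m hm u hu M hM a x => ?_⟩
  have hg : ContDiff ℝ N fun η => m η * w η :=
    contDiff_mul_of_contDiffOn_compl_zero hm.contDiffOn hw h0
  obtain ⟨hFint, hFle⟩ := hK _ B hg tsupport_mul_subset_right (hB m hm)
  have hM0 : 0 ≤ M := (norm_nonneg _).trans (hM 0)
  calc ‖𝓕⁻ (fun ξ => (m (a • ξ) * w (a • ξ)) • u ξ) x‖
      ≤ (∫ y, ‖𝓕 (fun η => m η * w η) y‖) * M :=
        norm_fourierInv_comp_smul_smul_le (g := fun η => m η * w η) hg.continuous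
          (hg.continuous.integrable_of_hasCompactSupport hcompact.mul_left) hFint hu hM a x
    _ ≤ max (K * B) 1 * M := by
        gcongr
        exact hFle.trans (le_max_left _ _)

lemma exists_norm_fourierInv_dyadic_piece_le [CompleteSpace E] {N : ℕ} (hN : finrank ℝ V < N)
    (σ s : ℝ) {ψ : V → ℝ} (hψ : ContDiff ℝ N ψ) (hcompact : HasCompactSupport ψ)
    (h0 : (0 : V) ∉ tsupport ψ) :
    ∃ C > 0, ∀ m, IsMikhlinSymbol N σ m → ∀ v : V → E, Integrable (fun ξ => ‖ξ‖ ^ s • v ξ) →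
      ∀ M, (∀ x, ‖𝓕⁻ (fun ξ => ‖ξ‖ ^ s • v ξ) x‖ ≤ M) → ∀ a > 0, ∀ x,
        ‖𝓕⁻ (fun ξ => ψ (a • ξ) • m ξ • v ξ) x‖ ≤ C * M * a ^ (s - σ) := by
  have hsub : tsupport (fun η => ((‖η‖ ^ (-s) * ψ η : ℝ) : ℂ)) ⊆ tsupport ψ :=
    (tsupport_comp_subset Complex.ofReal_zero _).trans tsupport_mul_subset_right
  obtain ⟨C, hC, hbound⟩ := exists_norm_fourierInv_symbol_comp_smul_le (E := E) hN σ
    (Complex.ofRealCLM.contDiff.comp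
      (contDiff_mul_of_contDiffOn_compl_zero (contDiffOn_norm_rpow N (-s)) hψ h0))
    (hcompact.mono' (subset_closure.trans hsub)) (fun h => h0 (hsub h))
  refine ⟨C, hC, fun m hm v hv M hM a ha x => ?_⟩
  have hfactor (ξ : V) : ψ (a • ξ) • m ξ • v ξ = a ^ (s - σ) •
      ((a⁻¹ ^ (-σ) • m (a⁻¹ • a • ξ) * ((‖a • ξ‖ ^ (-s) * ψ (a • ξ) : ℝ) : ℂ)) •
        ‖ξ‖ ^ s • v ξ) := by
    rcases eq_or_ne ξ 0 with rfl | hξ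
    · simp [image_eq_zero_of_notMem_tsupport h0]
    have hcoeff : a ^ (s - σ) * a⁻¹ ^ (-σ) * (‖a • ξ‖ ^ (-s) * ‖ξ‖ ^ s) = 1 := by
      rw [norm_smul, Real.norm_of_nonneg ha.le, Real.mul_rpow ha.le (norm_nonneg ξ),
        Real.inv_rpow ha.le, Real.rpow_neg ha.le, Real.rpow_neg ha.le,
        Real.rpow_neg (norm_nonneg ξ), Real.rpow_sub ha]
      have : 0 < ‖ξ‖ := norm_pos_iff.2 hξ
      field_simp
    rw [inv_smul_smul₀ ha.ne', ← one_smul ℝ (ψ (a • ξ) • m ξ • v ξ), ← hcoeff]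
    simp only [← Complex.coe_smul, smul_smul, smul_eq_mul, Complex.ofReal_mul]
    ring_nf
  simp_rw [hfactor]
  rw [norm_fourierInv_const_smul, abs_of_pos (by positivity), mul_comm]
  gcongr
  exact hbound _ (hm.rpow_smul_comp_smul (inv_pos.2 ha)) _ hv M hM a x

lemma tendsto_fourierInv_cutoff_smul {l : Filter ℝ} [l.IsCountablyGenerated] {χ : V → ℝ}
    (hχ : Continuous χ) (hcompact : HasCompactSupport χ) {c : ℝ}
    (hlim : ∀ ξ ≠ 0, Tendsto (fun a : ℝ => χ (a • ξ)) l (𝓝 c)) [Nontrivial V] {F : V → E}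
    (hF : Integrable F) (x : V) :
    Tendsto (fun a : ℝ => 𝓕⁻ (fun ξ => χ (a • ξ) • F ξ) x) l (𝓝 (c • 𝓕⁻ F x)) := by
  obtain ⟨B, hB⟩ := hcompact.exists_bound_of_continuous hχ
  simp_rw [Real.fourierInv_eq]
  rw [← integral_smul]
  refine tendsto_integral_filter_of_dominated_convergence (fun ξ => B * ‖F ξ‖) ?_ ?_
    (hF.norm.const_mul B) ?_
  · refine .of_forall fun a => ?_
    have hphase : Continuous fun ξ : V => (𝐞 ⟪ξ, x⟫_ℝ : ℂ) := by fun_prop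
    exact hphase.aestronglyMeasurable.smul
      ((hχ.comp (continuous_const_smul a)).aestronglyMeasurable.smul hF.aestronglyMeasurable)
  · refine .of_forall fun a => .of_forall fun ξ => ?_
    rw [Circle.norm_smul, norm_smul]
    gcongr
    exact hB _
  · filter_upwards [Measure.ae_ne volume (0 : V)] with ξ hξ
    simpa only [smul_comm c] using ((hlim ξ hξ).smul_const (F ξ)).const_smul (𝐞 ⟪ξ, x⟫_ℝ)

end DyadicPieces

section Interpolation

variable {V E : Type*} [NormedAddCommGroup V] [InnerProductSpace ℝ V] [FiniteDimensional ℝ V]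
  [MeasurableSpace V] [BorelSpace V] [Nontrivial V] [NormedAddCommGroup E] [NormedSpace ℂ E]

lemma norm_fourierInv_le_of_dyadic_pieces {χ : V → ℝ} (hχ : Continuous χ)
    (hcompact : HasCompactSupport χ) (hone : χ 0 = 1) {F : V → E} (hF : Integrable F) {A B ε : ℝ}
    (hε : 0 < ε) (x : V)
    (hA : ∀ a > 0, ‖𝓕⁻ (fun ξ => (χ (a • ξ) - χ ((2 : ℝ) • a • ξ)) • F ξ) x‖ ≤ A * a ^ ε)
    (hB : ∀ a > 0, ‖𝓕⁻ (fun ξ => (χ (a • ξ) - χ ((2 : ℝ) • a • ξ)) • F ξ) x‖ ≤ B * a ^ (-ε)) :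
    ‖𝓕⁻ F x‖ ≤ 2 / (1 - 2 ^ (-ε)) * (√A * √B) := by
  obtain ⟨D, hD⟩ := hcompact.exists_bound_of_continuous hχ
  have hint (a : ℝ) : Integrable fun ξ => χ (a • ξ) • F ξ :=
    hF.bdd_smul (𝕜 := ℝ) D (hχ.comp (continuous_const_smul a)).aestronglyMeasurable
      (.of_forall fun ξ => hD (a • ξ))
  have hdiff (a : ℝ) :
      𝓕⁻ (fun ξ => χ (a • ξ) • F ξ) x - 𝓕⁻ (fun ξ => χ ((2 * a) • ξ) • F ξ) x =
        𝓕⁻ (fun ξ => (χ (a • ξ) - χ ((2 : ℝ) • a • ξ)) • F ξ) x := by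
    simp_rw [← fourierInv_sub_apply (hint a) (hint (2 * a)), sub_smul, smul_smul]
  refine norm_le_of_dyadic_differences (I := fun a => 𝓕⁻ (fun ξ => χ (a • ξ) • F ξ) x) hε
    (fun a ha => (hdiff a).symm ▸ hA a ha) (fun a ha => (hdiff a).symm ▸ hB a ha) ?_ ?_
  · have hlim (ξ : V) : Tendsto (fun a : ℝ => χ (a • ξ)) (𝓝 0) (𝓝 1) :=
      (hχ.comp (continuous_id.smul continuous_const)).tendsto' 0 1 (by simp [hone])
    simpa using tendsto_fourierInv_cutoff_smul hχ hcompact (fun ξ _ => hlim ξ) hF x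
  · simpa using tendsto_fourierInv_cutoff_smul hχ hcompact
      (fun ξ hξ => tendsto_comp_smul_atTop_of_hasCompactSupport hcompact hξ) hF x

theorem multiplier_interpolation_bound_general [CompleteSpace E] {N : ℕ} (hN : finrank ℝ V < N)
    (σ : ℝ) {ε : ℝ} (hε : 0 < ε) :
    ∃ C > 0, ∀ (m : V → ℂ) (v : V → E), IsMikhlinSymbol N σ m → AEStronglyMeasurable v →
      Integrable (fun ξ => (‖ξ‖ ^ (σ - ε) + ‖ξ‖ ^ (σ + ε)) * ‖v ξ‖) →
      ∀ Mp Mm : ℝ, (∀ x, ‖𝓕⁻ (fun ξ => ‖ξ‖ ^ (σ + ε) • v ξ) x‖ ≤ Mp) →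
        (∀ x, ‖𝓕⁻ (fun ξ => ‖ξ‖ ^ (σ - ε) • v ξ) x‖ ≤ Mm) →
        ∀ x, ‖𝓕⁻ (fun ξ => m ξ • v ξ) x‖ ≤ C * √Mp * √Mm := by
  let χ : ContDiffBump (0 : V) := ⟨1, 2, one_pos, one_lt_two⟩
  have hχ : ContDiff ℝ N χ := χ.contDiff
  have hdilate : HasCompactSupport fun η => χ ((2 : ℝ) • η) :=
    χ.hasCompactSupport.comp_smul two_ne_zero
  have hpiece (s : ℝ) := exists_norm_fourierInv_dyadic_piece_le (E := E) hN σ s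
    (hχ.sub (hχ.comp (contDiff_const_smul (2 : ℝ)))) (χ.hasCompactSupport.sub hdilate)
    (zero_notMem_tsupport_sub_comp_two_smul χ.eventuallyEq_one)
  obtain ⟨Cp, hCp, hp⟩ := hpiece (σ + ε)
  obtain ⟨Cm, hCm, hm⟩ := hpiece (σ - ε)
  have hratio : (2 : ℝ) ^ (-ε) < 1 :=
    Real.rpow_lt_one_of_one_lt_of_neg one_lt_two (neg_lt_zero.2 hε)
  refine ⟨2 / (1 - 2 ^ (-ε)) * (√Cp * √Cm), mul_pos (div_pos two_pos (sub_pos.2 hratio))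
    (by positivity), fun m v hsymbol hv hint Mp Mm hMp hMm x => ?_⟩
  have hvp : Integrable fun ξ => ‖ξ‖ ^ (σ + ε) • v ξ :=
    integrable_norm_rpow_smul hv (fun ξ => le_add_of_nonneg_left (by positivity)) hint
  have hvm : Integrable fun ξ => ‖ξ‖ ^ (σ - ε) • v ξ :=
    integrable_norm_rpow_smul hv (fun ξ => le_add_of_nonneg_right (by positivity)) hint
  have hmv : Integrable fun ξ => m ξ • v ξ :=
    integrable_smul_of_norm_le_of_ne hsymbol.aestronglyMeasurable hv (fun ξ hξ =>
      (hsymbol.norm_le hξ).trans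
        (rpow_le_rpow_sub_add_rpow_add (norm_pos_iff.2 hξ) σ hε.le)) hint
  calc ‖𝓕⁻ (fun ξ => m ξ • v ξ) x‖
      ≤ 2 / (1 - 2 ^ (-ε)) * (√(Cp * Mp) * √(Cm * Mm)) :=
        norm_fourierInv_le_of_dyadic_pieces hχ.continuous χ.hasCompactSupport
          χ.eventuallyEq_one.eq_of_nhds hmv hε x
          (fun a ha => by simpa using hp m hsymbol v hvp Mp hMp a ha x)
          (fun a ha => by simpa [sub_right_comm] using hm m hsymbol v hvm Mm hMm a ha x)
    _ = 2 / (1 - 2 ^ (-ε)) * (√Cp * √Cm) * √Mp * √Mm := by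
        rw [Real.sqrt_mul hCp.le, Real.sqrt_mul hCm.le]
        ring

end Interpolation

/-- Interpolation bound for a Fourier multiplier of order `σ`:
`‖𝒯f‖_∞ ≲ ‖Λ^{σ+ε}f‖_∞^{1/2} ‖Λ^{σ−ε}f‖_∞^{1/2}`. -/
theorem multiplier_interpolation_bound
    (d : ℕ) (hd : 1 ≤ d) (σ ε : ℝ) (hσ : -(d : ℝ) < σ) (hε : 0 < ε) (hε1 : ε < 1) :
    ∃ C : ℝ, 0 < C ∧
      ∀ m v : EuclideanSpace ℝ (Fin d) → ℂ,
        ContDiffOn ℝ (d + 2) m {0}ᶜ →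
        (∀ k : ℕ, k ≤ d + 2 → ∀ ξ : EuclideanSpace ℝ (Fin d), ξ ≠ 0 →
          ‖iteratedFDerivWithin ℝ k m {0}ᶜ ξ‖ ≤ ‖ξ‖ ^ (σ - (k : ℝ))) →
        Measurable v →
        Integrable (fun ξ : EuclideanSpace ℝ (Fin d) =>
          (‖ξ‖ ^ (σ - ε) + ‖ξ‖ ^ (σ + ε)) * ‖v ξ‖) →
        ∀ Mp Mm : ℝ,
          (∀ x : EuclideanSpace ℝ (Fin d),
            ‖∫ ξ : EuclideanSpace ℝ (Fin d),
                ((‖ξ‖ ^ (σ + ε) : ℝ) : ℂ) * v ξ * Complex.exp ((⟪x, ξ⟫_ℝ : ℂ) * Complex.I)‖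
              ≤ Mp) →
          (∀ x : EuclideanSpace ℝ (Fin d),
            ‖∫ ξ : EuclideanSpace ℝ (Fin d),
                ((‖ξ‖ ^ (σ - ε) : ℝ) : ℂ) * v ξ * Complex.exp ((⟪x, ξ⟫_ℝ : ℂ) * Complex.I)‖
              ≤ Mm) →
          ∀ x : EuclideanSpace ℝ (Fin d),
            ‖∫ ξ : EuclideanSpace ℝ (Fin d),
                m ξ * v ξ * Complex.exp ((⟪x, ξ⟫_ℝ : ℂ) * Complex.I)‖ ≤
              C * Real.sqrt Mp * Real.sqrt Mm := by
  have : Nonempty (Fin d) := ⟨⟨0, hd⟩⟩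
  obtain ⟨C, hC, hbound⟩ := multiplier_interpolation_bound_general
    (V := EuclideanSpace ℝ (Fin d)) (E := ℂ) (N := d + 1) (by simp) σ hε
  refine ⟨C, hC, fun m v hm hmb hv hint Mp Mm hMp hMm => ?_⟩
  refine forall_norm_fourierInv_le_iff.1 (hbound m v
    ⟨hm.of_le (mod_cast Nat.le_succ _), fun k hk => hmb k (by omega)⟩
    hv.aestronglyMeasurable hint Mp Mm ?_ ?_)
  · simpa only [Complex.real_smul] using forall_norm_fourierInv_le_iff.2 hMp
  · simpa only [Complex.real_smul] using forall_norm_fourierInv_le_iff.2 hMm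
end

section
/- Let κ ∈ (0,1) and C_G ≥ 0. Let G : {(θ,η) ∈ ℝ² × ℝ² : θ ≠ η} → ℝ be continuously differentiable in each variable with continuous mixed derivative ∇_θ∇_η G, satisfying |G(θ,η)| + |θ−η|·(|∇_θ G(θ,η)| + |∇_η G(θ,η)|) + |θ−η|²·|∇_θ∇_η G(θ,η)| ≤ C_G / |θ−η| for all θ ≠ η. For f : ℝ² → ℝ² continuously differentiable with compact support, define 𝓜f(θ) := ∫_{ℝ²} G(θ,η) · div f(η) dη. Then there is a constant C depending only on κ such that [𝓜f]_{Ċ^κ} ≤ C · C_G · [f]_{Ċ^κ}. -/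
open MeasureTheory Set

/-!
Put `r = ‖θ - θ'‖` and let `ψ` be a smooth cutoff equal to `1` on the ball of radius `2r` about `θ`
and supported in the ball of radius `4r`. Then
`𝓜f(θ) - 𝓜f(θ') = ∫ ψ G(θ,·) div f - ∫ ψ G(θ',·) div f + ∫ (1 - ψ) (G(θ,·) - G(θ',·)) div f`.
In each integral the derivative is moved from `f` to the kernel, after subtracting from `f` its
value at the singularity `θ` (or `θ'`): this does not change `div f`, and the Hölder bound turns
the difference into a factor `‖η - θ‖ ^ κ`. In polar coordinates the first two integrals are then
bounded by `∫₀^{6r} ρ^(κ-1) dρ`, while for the third the mean value theorem in `θ` gains a factor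
`r / ‖η - θ‖`, so that it is bounded by `r ∫_{2r}^∞ ρ^(κ-2) dρ`; all of these are of order `r ^ κ`.
No boundary terms arise: in dimension `n`, the integral of the derivative of `u` vanishes whenever
`u(x) = o(‖x - x₀‖ ^ (1 - n))` both at the only singularity `x₀` and at infinity.
-/

open Filter Metric Module Topology

section Bump

variable {E : Type*} [NormedAddCommGroup E] [NormedSpace ℝ E]

/-- The smooth cutoff equal to `1` on the ball of radius `ρ` about `c` and to `0` outside the ball
of radius `2 * ρ`. Keeping the ratio of the radii fixed makes all these cutoffs rescalings of one
another, so that their derivatives obey a bound uniform in `c` and `ρ`. -/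
def dyadicBump (c : E) {ρ : ℝ} (hρ : 0 < ρ) : ContDiffBump c := ⟨ρ, 2 * ρ, hρ, by linarith⟩

variable [FiniteDimensional ℝ E]

lemma dyadicBump_eventuallyEq_one {c x : E} {ρ : ℝ} (hρ : 0 < ρ) (hx : ‖x - c‖ < ρ) :
    dyadicBump c hρ =ᶠ[𝓝 x] 1 :=
  (dyadicBump c hρ).eventuallyEq_one_of_mem_ball (mem_ball_iff_norm.2 hx)

lemma dyadicBump_eq_one {c x : E} {ρ : ℝ} (hρ : 0 < ρ) (hx : ‖x - c‖ ≤ ρ) :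
    dyadicBump c hρ x = 1 :=
  (dyadicBump c hρ).one_of_mem_closedBall (mem_closedBall_iff_norm.2 hx)

lemma dyadicBump_eq_zero {c x : E} {ρ : ℝ} (hρ : 0 < ρ) (hx : 2 * ρ ≤ ‖x - c‖) :
    dyadicBump c hρ x = 0 :=
  (dyadicBump c hρ).zero_of_le_dist (by rwa [dist_eq_norm])

lemma fderiv_dyadicBump_of_lt {c x : E} {ρ : ℝ} (hρ : 0 < ρ) (hx : ‖x - c‖ < ρ) :
    fderiv ℝ (dyadicBump c hρ) x = 0 := by
  rw [(dyadicBump_eventuallyEq_one hρ hx).fderiv_eq, Pi.one_def, fderiv_fun_const, Pi.zero_apply]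

lemma fderiv_dyadicBump_of_gt {c x : E} {ρ : ℝ} (hρ : 0 < ρ) (hx : 2 * ρ < ‖x - c‖) :
    fderiv ℝ (dyadicBump c hρ) x = 0 := by
  refine image_eq_zero_of_notMem_tsupport fun h ↦ hx.not_ge ?_
  have := tsupport_fderiv_subset ℝ h
  rwa [(dyadicBump c hρ).tsupport_eq, mem_closedBall_iff_norm] at this

lemma dyadicBump_eq_dyadicBump_one (c x : E) {ρ : ℝ} (hρ : 0 < ρ) :
    dyadicBump c hρ x = dyadicBump (0 : E) one_pos (ρ⁻¹ • (x - c)) := by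
  simp [ContDiffBump.apply, dyadicBump, hρ.ne']

variable (E) in
lemma exists_norm_fderiv_dyadicBump_le :
    ∃ L : ℝ, 0 < L ∧ ∀ (c : E) {ρ : ℝ} (hρ : 0 < ρ) (x : E),
      ‖fderiv ℝ (dyadicBump c hρ) x‖ ≤ L / ‖x - c‖ := by
  set χ := dyadicBump (0 : E) one_pos
  have hχ : Continuous fun y ↦ ‖y‖ * ‖fderiv ℝ χ y‖ :=
    continuous_norm.mul (χ.contDiff.continuous_fderiv one_ne_zero).norm
  obtain ⟨L, hL⟩ := (χ.hasCompactSupport.fderiv ℝ).norm.mul_left.exists_bound_of_continuous hχ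
  refine ⟨max L 1, by positivity, fun c ρ hρ x ↦ ?_⟩
  rcases (norm_nonneg (x - c)).eq_or_lt' with hx | hx
  · rw [fderiv_dyadicBump_of_lt hρ (hx ▸ hρ), norm_zero, hx, div_zero]
  have hderiv : fderiv ℝ (dyadicBump c hρ) x = ρ⁻¹ • fderiv ℝ χ (ρ⁻¹ • (x - c)) := by
    rw [funext fun y ↦ dyadicBump_eq_dyadicBump_one c y hρ,
      fderiv_comp_sub (f := fun y ↦ χ (ρ⁻¹ • y)), fderiv_comp_smul]
  rw [le_div_iff₀ hx]
  calc ‖fderiv ℝ (dyadicBump c hρ) x‖ * ‖x - c‖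
      = ‖ρ⁻¹ • (x - c)‖ * ‖fderiv ℝ χ (ρ⁻¹ • (x - c))‖ := by
        rw [hderiv, norm_smul, norm_smul, mul_right_comm]
    _ ≤ L := (le_abs_self _).trans (hL _)
    _ ≤ max L 1 := le_max_left ..

lemma norm_fderiv_dyadicBump_le_of_norm_sub_le {c x x₀ : E} {L ρ : ℝ} (hρ : 0 < ρ)
    (hL : ‖fderiv ℝ (dyadicBump c hρ) x‖ ≤ L / ‖x - c‖) (hL₀ : 0 ≤ L) (hx₀ : ‖x₀ - c‖ ≤ ρ)
    (hx : x ≠ x₀) :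
    ‖fderiv ℝ (dyadicBump c hρ) x‖ ≤ 2 * L / ‖x - x₀‖ := by
  rcases lt_or_ge ‖x - c‖ ρ with hxc | hxc
  · rw [fderiv_dyadicBump_of_lt hρ hxc, norm_zero]
    positivity
  have hpos : 0 < ‖x - x₀‖ := norm_sub_pos_iff.2 hx
  have htri : ‖x - x₀‖ ≤ 2 * ‖x - c‖ := by
    have := norm_sub_le_norm_sub_add_norm_sub x c x₀
    rw [norm_sub_rev] at hx₀
    linarith
  calc ‖fderiv ℝ (dyadicBump c hρ) x‖ ≤ L / ‖x - c‖ := hL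
    _ = 2 * L / (2 * ‖x - c‖) := (mul_div_mul_left _ _ two_ne_zero).symm
    _ ≤ 2 * L / ‖x - x₀‖ := by gcongr

lemma norm_dyadicBump_le_one (c x : E) {ρ : ℝ} (hρ : 0 < ρ) : ‖dyadicBump c hρ x‖ ≤ 1 :=
  (Real.norm_of_nonneg (ContDiffBump.nonneg _)).trans_le (ContDiffBump.le_one _)

lemma norm_fderiv_dyadicBump_smulRight_le [Nontrivial E] {F : Type*}
    [NormedAddCommGroup F] [NormedSpace ℝ F] {L δ ρ : ℝ} {x₀ : E} (hρ : 0 < ρ)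
    {u : E → F} (hL₀ : 0 ≤ L) (hδ : 0 ≤ δ)
    (hL : ∀ x, ‖fderiv ℝ (dyadicBump x₀ hρ) x‖ ≤ L / ‖x - x₀‖)
    (hu : ∀ x ∈ closedBall x₀ (2 * ρ) \ ball x₀ ρ, ‖x - x₀‖ ^ (finrank ℝ E - 1) * ‖u x‖ ≤ δ)
    (x : E) :
    ‖(fderiv ℝ (dyadicBump x₀ hρ) x).smulRight (u x)‖ ≤
      (closedBall x₀ (2 * ρ)).indicator (fun _ ↦ L * δ / ρ ^ finrank ℝ E) x := by
  have hbound : 0 ≤ L * δ / ρ ^ finrank ℝ E := by positivity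
  rw [ContinuousLinearMap.norm_smulRight_apply]
  rcases lt_or_ge ‖x - x₀‖ ρ with hx | hx
  · rw [fderiv_dyadicBump_of_lt hρ hx, norm_zero, zero_mul]
    exact indicator_nonneg (fun _ _ ↦ hbound) x
  rcases lt_or_ge (2 * ρ) ‖x - x₀‖ with hx' | hx'
  · rw [fderiv_dyadicBump_of_gt hρ hx', norm_zero, zero_mul]
    exact indicator_nonneg (fun _ _ ↦ hbound) x
  have hpos : 0 < ‖x - x₀‖ := hρ.trans_le hx
  have hmem : x ∈ closedBall x₀ (2 * ρ) := mem_closedBall_iff_norm.2 hx'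
  rw [indicator_of_mem hmem]
  have hux := hu x ⟨hmem, by simpa [dist_eq_norm] using hx⟩
  calc ‖fderiv ℝ (dyadicBump x₀ hρ) x‖ * ‖u x‖
      ≤ L / ‖x - x₀‖ * ‖u x‖ := by gcongr; exact hL x
    _ = L * (‖x - x₀‖ ^ (finrank ℝ E - 1) * ‖u x‖) / ‖x - x₀‖ ^ finrank ℝ E := by
        rw [← pow_sub_one_mul finrank_pos.ne' ‖x - x₀‖]
        field_simp
    _ ≤ L * δ / ρ ^ finrank ℝ E := by gcongr

end Bump

section IntegrationByParts

variable {E F G₁ G₂ : Type*} [NormedAddCommGroup E] [MeasurableSpace E] [BorelSpace E]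
  {μ : Measure E}
  [NormedAddCommGroup F] [NormedSpace ℝ F] [NormedAddCommGroup G₁] [NormedSpace ℝ G₁]
  [NormedAddCommGroup G₂] [NormedSpace ℝ G₂]

lemma integrable_bilin_of_notMem_tsupport [IsFiniteMeasureOnCompacts μ] (B : G₁ →L[ℝ] F →L[ℝ] G₂)
    {a : E → G₁} {u : E → F} {x₀ : E} (ha : Continuous a) (ha' : HasCompactSupport a)
    (hx₀ : x₀ ∉ tsupport a) (hu : ContinuousOn u {x₀}ᶜ) :
    Integrable (fun x ↦ B (a x) (u x)) μ := by
  have hsupp : Function.support (fun x ↦ B (a x) (u x)) ⊆ Function.support a := fun x hx ha ↦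
    hx (by simp [ha])
  refine Continuous.integrable_of_hasCompactSupport (continuous_of_tsupport fun x hx ↦ ?_)
    (ha'.mono hsupp)
  have hx' : x ≠ x₀ := fun h ↦ hx₀ (h ▸ closure_mono hsupp hx)
  have hux : ContinuousAt u x := hu.continuousAt (isOpen_compl_singleton.mem_nhds hx')
  exact (B.continuous.continuousAt.comp ha.continuousAt).clm_apply hux

variable [NormedSpace ℝ E] [FiniteDimensional ℝ E] [μ.IsAddHaarMeasure]

lemma integral_smul_fderiv_eq_neg_of_notMem_tsupport {φ : E → ℝ} {u : E → F} {x₀ : E}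
    (hφ : ContDiff ℝ 1 φ) (hφ' : HasCompactSupport φ) (hx₀ : x₀ ∉ tsupport φ)
    (hu : DifferentiableOn ℝ u {x₀}ᶜ) (hu' : Integrable (fderiv ℝ u) μ) :
    ∫ x, φ x • fderiv ℝ u x ∂μ = -∫ x, (fderiv ℝ φ x).smulRight (u x) ∂μ := by
  have hφdiff : Differentiable ℝ φ := hφ.differentiable one_ne_zero
  have hφu : Integrable (fun x ↦ φ x • u x) μ :=
    integrable_bilin_of_notMem_tsupport (ContinuousLinearMap.lsmul ℝ ℝ) hφ.continuous hφ' hx₀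
      hu.continuousOn
  have hφ'u : Integrable (fun x ↦ (fderiv ℝ φ x).smulRight (u x)) μ :=
    integrable_bilin_of_notMem_tsupport (ContinuousLinearMap.smulRightL ℝ E F)
      (hφ.continuous_fderiv one_ne_zero) (hφ'.fderiv ℝ)
      (fun h ↦ hx₀ (tsupport_fderiv_subset ℝ h)) hu.continuousOn
  have hφu' : Integrable (fun x ↦ φ x • fderiv ℝ u x) μ := by
    obtain ⟨C, hC⟩ := hφ'.exists_bound_of_continuous hφ.continuous
    exact hu'.bdd_smul C hφ.continuous.aestronglyMeasurable (.of_forall hC)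
  ext v
  rw [neg_apply, ContinuousLinearMap.integral_apply hφu', ContinuousLinearMap.integral_apply hφ'u]
  refine integral_smul_fderiv_eq_neg_fderiv_smul_of_integrable (hφ'u.apply_continuousLinearMap v)
    (hφu'.apply_continuousLinearMap v) hφu (fun x _ ↦ hφdiff x) fun x hx ↦ ?_
  exact hu.differentiableAt (isOpen_compl_singleton.mem_nhds fun h ↦ hx₀ (h ▸ hx))

end IntegrationByParts

section Annulus

variable {E : Type*} [NormedAddCommGroup E] {x₀ : E}

lemma tendsto_closedBall_diff_ball_smallSets_nhdsNE {r R : ℕ → ℝ}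
    (hr : ∀ k, 0 < r k) (hR : Tendsto R atTop (𝓝 0)) :
    Tendsto (fun k ↦ closedBall x₀ (R k) \ ball x₀ (r k)) atTop (𝓝[≠] x₀).smallSets := by
  rw [(nhdsWithin_hasBasis nhds_basis_ball _).smallSets.tendsto_right_iff]
  intro ε hε
  filter_upwards [hR.eventually_lt_const hε] with k hk x hx
  refine ⟨closedBall_subset_ball hk hx.1, ?_⟩
  rintro rfl
  exact hx.2 (mem_ball_self (hr k))

lemma tendsto_closedBall_diff_ball_smallSets_cobounded {r R : ℕ → ℝ} (hr : Tendsto r atTop atTop) :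
    Tendsto (fun k ↦ closedBall x₀ (R k) \ ball x₀ (r k)) atTop
      (Bornology.cobounded E).smallSets := by
  rw [(hasBasis_cobounded_compl_ball x₀).smallSets.tendsto_right_iff]
  intro C _
  filter_upwards [hr.eventually_ge_atTop C] with k hk x hx
  exact fun h ↦ hx.2 (ball_subset_ball hk h)

end Annulus

section IntegralFDeriv

variable {E F : Type*} [NormedAddCommGroup E] [NormedSpace ℝ E] [FiniteDimensional ℝ E]
  [MeasurableSpace E] [BorelSpace E] {μ : Measure E}
  [NormedAddCommGroup F] [NormedSpace ℝ F]

lemma integrable_dyadicBump_smul {g : E → F} (hg : Integrable g μ) (x₀ : E) {ρ : ℝ} (hρ : 0 < ρ) :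
    Integrable (fun x ↦ dyadicBump x₀ hρ x • g x) μ :=
  hg.bdd_smul 1 (dyadicBump x₀ hρ).continuous.aestronglyMeasurable (.of_forall fun x ↦
    norm_dyadicBump_le_one x₀ x hρ)

lemma tendsto_integral_dyadicBump_smul [NullSingletonClass μ] {g : E → F} (hg : Integrable g μ)
    {x₀ : E} {ρ : ℕ → ℝ} (hρ : ∀ k, 0 < ρ k) {a : ℝ}
    (h : ∀ x ≠ x₀, ∀ᶠ k in atTop, dyadicBump x₀ (hρ k) x = a) :
    Tendsto (fun k ↦ ∫ x, dyadicBump x₀ (hρ k) x • g x ∂μ) atTop (𝓝 (a • ∫ x, g x ∂μ)) := by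
  rw [← integral_smul]
  refine tendsto_integral_of_dominated_convergence (fun x ↦ ‖g x‖)
    (fun k ↦ (integrable_dyadicBump_smul hg x₀ (hρ k)).1) hg.norm
    (fun k ↦ .of_forall fun x ↦ ?_) ?_
  · rw [norm_smul]
    exact mul_le_of_le_one_left (norm_nonneg _) (norm_dyadicBump_le_one x₀ x (hρ k))
  · filter_upwards [μ.ae_ne x₀] with x hx
    exact (tendsto_const_nhds.congr' <| (h x hx).mono fun k hk ↦ hk.symm).smul_const (g x)

variable [μ.IsAddHaarMeasure]

variable (μ) in
lemma integrable_fderiv_dyadicBump_smulRight {u : E → F} {x₀ : E} (hu : ContinuousOn u {x₀}ᶜ)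
    {ρ : ℝ} (hρ : 0 < ρ) :
    Integrable (fun x ↦ (fderiv ℝ (dyadicBump x₀ hρ) x).smulRight (u x)) μ := by
  refine integrable_bilin_of_notMem_tsupport (ContinuousLinearMap.smulRightL ℝ E F)
    ((dyadicBump x₀ hρ).contDiff.continuous_fderiv one_ne_zero)
    ((dyadicBump x₀ hρ).hasCompactSupport.fderiv ℝ) ?_ hu
  rw [notMem_tsupport_iff_eventuallyEq]
  filter_upwards [ball_mem_nhds x₀ hρ] with x hx
    using fderiv_dyadicBump_of_lt hρ (mem_ball_iff_norm.1 hx)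

variable (μ) in
lemma integral_dyadicBump_smul_fderiv_sub {u : E → F} {x₀ : E} {r R : ℝ} (hr : 0 < r) (hR : 0 < R)
    (hu : DifferentiableOn ℝ u {x₀}ᶜ) (hu' : Integrable (fderiv ℝ u) μ) :
    ∫ x, dyadicBump x₀ hR x • fderiv ℝ u x ∂μ - ∫ x, dyadicBump x₀ hr x • fderiv ℝ u x ∂μ =
      ∫ x, (fderiv ℝ (dyadicBump x₀ hr) x).smulRight (u x) ∂μ -
        ∫ x, (fderiv ℝ (dyadicBump x₀ hR) x).smulRight (u x) ∂μ := by
  have hderiv (x : E) :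
      (fderiv ℝ (fun y ↦ dyadicBump x₀ hR y - dyadicBump x₀ hr y) x).smulRight (u x) =
        (fderiv ℝ (dyadicBump x₀ hR) x).smulRight (u x) -
          (fderiv ℝ (dyadicBump x₀ hr) x).smulRight (u x) := by
    rw [fderiv_fun_sub ((dyadicBump x₀ hR).contDiff.differentiable one_ne_zero x)
      ((dyadicBump x₀ hr).contDiff.differentiable one_ne_zero x)]
    ext v
    simp [sub_smul]
  have hx₀ : x₀ ∉ tsupport fun y ↦ dyadicBump x₀ hR y - dyadicBump x₀ hr y := by
    rw [notMem_tsupport_iff_eventuallyEq]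
    filter_upwards [(dyadicBump x₀ hR).eventuallyEq_one, (dyadicBump x₀ hr).eventuallyEq_one]
      with x hxR hxr
    simp [hxR, hxr]
  have hparts := integral_smul_fderiv_eq_neg_of_notMem_tsupport
    ((dyadicBump x₀ hR).contDiff.sub (dyadicBump x₀ hr).contDiff)
    ((dyadicBump x₀ hR).hasCompactSupport.sub (dyadicBump x₀ hr).hasCompactSupport) hx₀ hu hu'
  simp only [hderiv, sub_smul] at hparts
  rwa [integral_sub (integrable_dyadicBump_smul hu' x₀ hR) (integrable_dyadicBump_smul hu' x₀ hr),
    integral_sub (integrable_fderiv_dyadicBump_smulRight μ hu.continuousOn hR)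
      (integrable_fderiv_dyadicBump_smulRight μ hu.continuousOn hr), neg_sub] at hparts

variable [Nontrivial E]

variable (μ) in
lemma norm_integral_fderiv_dyadicBump_smulRight_le {L δ ρ : ℝ} {x₀ : E} (hρ : 0 < ρ) {u : E → F}
    (hL₀ : 0 ≤ L) (hδ : 0 ≤ δ) (hL : ∀ x, ‖fderiv ℝ (dyadicBump x₀ hρ) x‖ ≤ L / ‖x - x₀‖)
    (hu : ∀ x ∈ closedBall x₀ (2 * ρ) \ ball x₀ ρ, ‖x - x₀‖ ^ (finrank ℝ E - 1) * ‖u x‖ ≤ δ) :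
    ‖∫ x, (fderiv ℝ (dyadicBump x₀ hρ) x).smulRight (u x) ∂μ‖ ≤
      2 ^ finrank ℝ E * μ.real (closedBall (0 : E) 1) * L * δ := by
  have hint : Integrable ((closedBall x₀ (2 * ρ)).indicator
      fun _ ↦ L * δ / ρ ^ finrank ℝ E) μ :=
    (integrable_indicator_iff measurableSet_closedBall).2
      (integrableOn_const measure_closedBall_lt_top.ne)
  refine (norm_integral_le_of_norm_le hint
    (.of_forall (norm_fderiv_dyadicBump_smulRight_le hρ hL₀ hδ hL hu))).trans_eq ?_
  rw [integral_indicator_const _ measurableSet_closedBall,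
    Measure.addHaar_real_closedBall' μ x₀ (by positivity), smul_eq_mul, mul_pow]
  field_simp

variable (μ) in
lemma tendsto_integral_fderiv_dyadicBump_smulRight {u : E → F} {x₀ : E} {l : Filter E}
    {ρ : ℕ → ℝ} (hρ : ∀ k, 0 < ρ k)
    (hl : Tendsto (fun k ↦ closedBall x₀ (2 * ρ k) \ ball x₀ (ρ k)) atTop l.smallSets)
    (hu : Tendsto (fun x ↦ ‖x - x₀‖ ^ (finrank ℝ E - 1) * ‖u x‖) l (𝓝 0)) :
    Tendsto (fun k ↦ ∫ x, (fderiv ℝ (dyadicBump x₀ (hρ k)) x).smulRight (u x) ∂μ)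
      atTop (𝓝 0) := by
  obtain ⟨L, hL₀, hL⟩ := exists_norm_fderiv_dyadicBump_le E
  set M : ℝ := 2 ^ finrank ℝ E * μ.real (closedBall 0 1) * L
  have : 0 ≤ M := by positivity
  refine NormedAddGroup.tendsto_nhds_zero.2 fun ε hε ↦ ?_
  have hδ : 0 < ε / (M + 1) := by positivity
  filter_upwards [hl.eventually (eventually_smallSets_forall.2 (hu.eventually_le_const hδ))]
    with k hk
  calc ‖∫ x, (fderiv ℝ (dyadicBump x₀ (hρ k)) x).smulRight (u x) ∂μ‖
      ≤ M * (ε / (M + 1)) :=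
        norm_integral_fderiv_dyadicBump_smulRight_le μ (hρ k) hL₀.le hδ.le (hL x₀ (hρ k)) hk
    _ < ε := by
        rw [mul_div_assoc', div_lt_iff₀ (by positivity)]
        nlinarith

lemma integral_fderiv_eq_zero_of_tendsto {u : E → F} {x₀ : E}
    (hu : DifferentiableOn ℝ u {x₀}ᶜ) (hu' : Integrable (fderiv ℝ u) μ)
    (hzero : Tendsto (fun x ↦ ‖x - x₀‖ ^ (finrank ℝ E - 1) * ‖u x‖) (𝓝[≠] x₀) (𝓝 0))
    (hinfty : Tendsto (fun x ↦ ‖x - x₀‖ ^ (finrank ℝ E - 1) * ‖u x‖) (Bornology.cobounded E)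
      (𝓝 0)) :
    ∫ x, fderiv ℝ u x ∂μ = 0 := by
  have hr (k : ℕ) : 0 < 1 / ((k : ℝ) + 1) := by positivity
  have hR (k : ℕ) : 0 < (k : ℝ) + 1 := by positivity
  have hr_lim : Tendsto (fun k : ℕ ↦ 2 * (1 / ((k : ℝ) + 1))) atTop (𝓝 0) := by
    simpa using tendsto_one_div_add_atTop_nhds_zero_nat.const_mul (2 : ℝ)
  have hR_lim : Tendsto (fun k : ℕ ↦ (k : ℝ) + 1) atTop atTop :=
    tendsto_atTop_add_const_right _ _ tendsto_natCast_atTop_atTop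
  have inner_lim : Tendsto (fun k ↦ ∫ x, dyadicBump x₀ (hr k) x • fderiv ℝ u x ∂μ) atTop
      (𝓝 ((0 : ℝ) • ∫ x, fderiv ℝ u x ∂μ)) := by
    refine tendsto_integral_dyadicBump_smul hu' hr fun x hx ↦ ?_
    exact (hr_lim.eventually_le_const (norm_sub_pos_iff.2 hx)).mono fun k ↦
      dyadicBump_eq_zero (hr k)
  have outer_lim : Tendsto (fun k ↦ ∫ x, dyadicBump x₀ (hR k) x • fderiv ℝ u x ∂μ) atTop
      (𝓝 ((1 : ℝ) • ∫ x, fderiv ℝ u x ∂μ)) := by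
    refine tendsto_integral_dyadicBump_smul hu' hR fun x _ ↦ ?_
    exact (hR_lim.eventually_ge_atTop ‖x - x₀‖).mono fun k ↦ dyadicBump_eq_one (hR k)
  have lim := outer_lim.sub inner_lim
  simp only [integral_dyadicBump_smul_fderiv_sub μ (hr _) (hR _) hu hu'] at lim
  have lim_zero := (tendsto_integral_fderiv_dyadicBump_smulRight μ hr
      (tendsto_closedBall_diff_ball_smallSets_nhdsNE hr hr_lim) hzero).sub
    (tendsto_integral_fderiv_dyadicBump_smulRight μ hR
      (tendsto_closedBall_diff_ball_smallSets_cobounded hR_lim) hinfty)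
  simpa using tendsto_nhds_unique lim lim_zero

end IntegralFDeriv

section Radial

lemma tendsto_norm_sub_cobounded_atTop {E : Type*} [NormedAddCommGroup E] (x₀ : E) :
    Tendsto (fun x ↦ ‖x - x₀‖) (Bornology.cobounded E) atTop := by
  simpa only [dist_eq_norm] using tendsto_dist_right_cobounded_atTop x₀

lemma tendsto_pow_mul_norm_mul_rpow {E : Type*} [NormedAddCommGroup E] {q : E → ℝ} {x₀ : E}
    {κ M : ℝ} {m j : ℕ} {l : Filter E} (hl : ∀ᶠ x in l, x ≠ x₀)
    (hqM : ∀ᶠ x in l, ‖q x‖ ≤ M / ‖x - x₀‖ ^ (m + j))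
    (h : Tendsto (fun x ↦ ‖x - x₀‖ ^ (κ - j)) l (𝓝 0)) :
    Tendsto (fun x ↦ ‖x - x₀‖ ^ m * (‖q x‖ * ‖x - x₀‖ ^ κ)) l (𝓝 0) := by
  refine squeeze_zero' (.of_forall fun x ↦ by positivity) ?_ (by simpa using h.const_mul M)
  filter_upwards [hl, hqM] with x hx hqx
  have hd : 0 < ‖x - x₀‖ := norm_sub_pos_iff.2 hx
  calc ‖x - x₀‖ ^ m * (‖q x‖ * ‖x - x₀‖ ^ κ)
      ≤ ‖x - x₀‖ ^ m * (M / ‖x - x₀‖ ^ (m + j) * ‖x - x₀‖ ^ κ) := by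
        gcongr
    _ = M * ‖x - x₀‖ ^ (κ - j) := by
        rw [Real.rpow_sub_natCast hd.ne', pow_add]
        field_simp

lemma tendsto_pow_mul_norm_smul_sub {E F : Type*} [NormedAddCommGroup E]
    [NormedAddCommGroup F] [NormedSpace ℝ F] {q : E → ℝ} {f : E → F} {x₀ : E} {κ K : ℝ}
    {l : Filter E}
    (hfK : ∀ x, ‖f x - f x₀‖ ≤ K * ‖x - x₀‖ ^ κ) {m : ℕ}
    (h : Tendsto (fun x ↦ ‖x - x₀‖ ^ m * (‖q x‖ * ‖x - x₀‖ ^ κ)) l (𝓝 0)) :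
    Tendsto (fun x ↦ ‖x - x₀‖ ^ m * ‖q x • (f x - f x₀)‖) l (𝓝 0) := by
  refine squeeze_zero (fun x ↦ by positivity) (fun x ↦ ?_) (by simpa using h.const_mul K)
  calc ‖x - x₀‖ ^ m * ‖q x • (f x - f x₀)‖
      ≤ ‖x - x₀‖ ^ m * (‖q x‖ * (K * ‖x - x₀‖ ^ κ)) := by
        rw [norm_smul]
        gcongr
        exact hfK x
    _ = K * (‖x - x₀‖ ^ m * (‖q x‖ * ‖x - x₀‖ ^ κ)) := by ring

variable {E : Type*} [NormedAddCommGroup E] [NormedSpace ℝ E] [FiniteDimensional ℝ E]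
  [Nontrivial E] [MeasurableSpace E] [BorelSpace E] {μ : Measure E} [μ.IsAddHaarMeasure]

lemma integrable_fun_norm_sub_addHaar {g : ℝ → ℝ}
    (hg : IntegrableOn (fun y ↦ y ^ (finrank ℝ E - 1) * g y) (Ioi 0)) (x₀ : E) :
    Integrable (fun x ↦ g ‖x - x₀‖) μ :=
  ((integrable_fun_norm_addHaar μ).2 hg).comp_sub_right x₀

lemma integral_fun_norm_sub_addHaar (g : ℝ → ℝ) (x₀ : E) :
    ∫ x, g ‖x - x₀‖ ∂μ =
      finrank ℝ E * μ.real (ball 0 1) * ∫ y in Ioi (0 : ℝ), y ^ (finrank ℝ E - 1) * g y := by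
  rw [integral_sub_right_eq_self (fun x ↦ g ‖x‖) x₀, integral_fun_norm_addHaar]
  simp [mul_assoc]

variable {F : Type*} [NormedAddCommGroup F] [NormedSpace ℝ F]

lemma integrable_smul_of_norm_le_div_pow {q : E → ℝ} {g : E → F} {x₀ : E} {M : ℝ}
    (hq : ContinuousOn q {x₀}ᶜ) (hqM : ∀ x ≠ x₀, ‖q x‖ ≤ M / ‖x - x₀‖ ^ (finrank ℝ E - 1))
    (hg : Continuous g) (hg' : HasCompactSupport g) :
    Integrable (fun x ↦ q x • g x) μ := by
  have hmeas : AEStronglyMeasurable q μ := by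
    rw [← restrict_compl_singleton (μ := μ) x₀]
    exact hq.aestronglyMeasurable (measurableSet_singleton x₀).compl
  have hloc : LocallyIntegrable (fun x ↦ q (x + x₀)) μ := by
    refine locallyIntegrable_of_norm_le_rpow (C := M) (α := (finrank ℝ E - 1 : ℕ)) finrank_pos
      (by exact_mod_cast Nat.sub_lt finrank_pos one_pos) ?_
      (hmeas.comp_quasiMeasurePreserving (quasiMeasurePreserving_add_right μ x₀))
    filter_upwards [μ.ae_ne 0] with x hx
    simpa [Real.rpow_neg, div_eq_mul_inv] using hqM (x + x₀) (by simpa using hx)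
  simpa using (hloc.integrable_smul_right_of_hasCompactSupport
    (hg.comp (continuous_add_const x₀))
    (hg'.comp_homeomorph (Homeomorph.addRight x₀))).comp_sub_right x₀

lemma integral_smul_fderiv_eq_neg_of_tendsto {q : E → ℝ} {g : E → F} {x₀ : E}
    (hq : DifferentiableOn ℝ q {x₀}ᶜ) (hg : Differentiable ℝ g)
    (hqg' : Integrable (fun x ↦ q x • fderiv ℝ g x) μ)
    (hq'g : Integrable (fun x ↦ (fderiv ℝ q x).smulRight (g x)) μ)
    (hzero : Tendsto (fun x ↦ ‖x - x₀‖ ^ (finrank ℝ E - 1) * ‖q x • g x‖) (𝓝[≠] x₀) (𝓝 0))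
    (hinfty : Tendsto (fun x ↦ ‖x - x₀‖ ^ (finrank ℝ E - 1) * ‖q x • g x‖)
      (Bornology.cobounded E) (𝓝 0)) :
    ∫ x, q x • fderiv ℝ g x ∂μ = -∫ x, (fderiv ℝ q x).smulRight (g x) ∂μ := by
  have hderiv : fderiv ℝ (fun x ↦ q x • g x) =ᵐ[μ]
      fun x ↦ q x • fderiv ℝ g x + (fderiv ℝ q x).smulRight (g x) := by
    filter_upwards [μ.ae_ne x₀] with x hx
    exact fderiv_fun_smul (hq.differentiableAt (isOpen_compl_singleton.mem_nhds hx)) (hg x)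
  have hint : Integrable (fderiv ℝ fun x ↦ q x • g x) μ :=
    (hqg'.add (ε' := E →L[ℝ] F) hq'g).congr hderiv.symm
  rw [eq_neg_iff_add_eq_zero, ← integral_add hqg' hq'g, ← integral_congr_ae hderiv]
  exact integral_fderiv_eq_zero_of_tendsto (hq.smul hg.differentiableOn) hint hzero hinfty

lemma norm_integral_smul_fderiv_le {q : E → ℝ} {f : E → F} {x₀ : E} {κ K : ℝ} {φ : ℝ → ℝ}
    (hq : DifferentiableOn ℝ q {x₀}ᶜ) (hf : Differentiable ℝ f)
    (hfK : ∀ x, ‖f x - f x₀‖ ≤ K * ‖x - x₀‖ ^ κ)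
    (hqf : Integrable (fun x ↦ q x • fderiv ℝ f x) μ)
    (hqφ : ∀ x ≠ x₀, ‖fderiv ℝ q x‖ ≤ φ ‖x - x₀‖)
    (hφ : IntegrableOn (fun y ↦ y ^ (finrank ℝ E - 1) * (y ^ κ * φ y)) (Ioi 0))
    (hzero : Tendsto (fun x ↦ ‖x - x₀‖ ^ (finrank ℝ E - 1) * (‖q x‖ * ‖x - x₀‖ ^ κ))
      (𝓝[≠] x₀) (𝓝 0))
    (hinfty : Tendsto (fun x ↦ ‖x - x₀‖ ^ (finrank ℝ E - 1) * (‖q x‖ * ‖x - x₀‖ ^ κ))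
      (Bornology.cobounded E) (𝓝 0)) :
    ‖∫ x, q x • fderiv ℝ f x ∂μ‖ ≤ finrank ℝ E * μ.real (ball 0 1) *
      (∫ y in Ioi (0 : ℝ), y ^ (finrank ℝ E - 1) * (y ^ κ * φ y)) * K := by
  set b : E → E →L[ℝ] F := fun x ↦ (fderiv ℝ q x).smulRight (f x - f x₀)
  have hb_le : ∀ᵐ x ∂μ, ‖b x‖ ≤ K * (‖x - x₀‖ ^ κ * φ ‖x - x₀‖) := by
    filter_upwards [μ.ae_ne x₀] with x hx
    calc ‖b x‖ = ‖fderiv ℝ q x‖ * ‖f x - f x₀‖ := ContinuousLinearMap.norm_smulRight_apply ..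
      _ ≤ φ ‖x - x₀‖ * (K * ‖x - x₀‖ ^ κ) :=
        mul_le_mul (hqφ x hx) (hfK x) (norm_nonneg _) ((norm_nonneg _).trans (hqφ x hx))
      _ = K * (‖x - x₀‖ ^ κ * φ ‖x - x₀‖) := by ring
  have hradial : Integrable (fun x ↦ K * (‖x - x₀‖ ^ κ * φ ‖x - x₀‖)) μ :=
    (integrable_fun_norm_sub_addHaar (g := fun y ↦ y ^ κ * φ y) hφ x₀).const_mul K
  have hb : Integrable b μ :=
    hradial.mono' ((ContinuousLinearMap.smulRightL ℝ E F).aestronglyMeasurable_comp₂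
      (measurable_fderiv ℝ q).aestronglyMeasurable
      (hf.continuous.sub continuous_const).aestronglyMeasurable) hb_le
  have hparts : ∫ x, q x • fderiv ℝ f x ∂μ = -∫ x, b x ∂μ := by
    simpa only [fderiv_sub_const] using
      integral_smul_fderiv_eq_neg_of_tendsto (g := fun x ↦ f x - f x₀) hq (hf.sub_const _)
        (by simpa only [fderiv_sub_const] using hqf) hb
        (tendsto_pow_mul_norm_smul_sub hfK hzero) (tendsto_pow_mul_norm_smul_sub hfK hinfty)
  calc ‖∫ x, q x • fderiv ℝ f x ∂μ‖ = ‖∫ x, b x ∂μ‖ := by rw [hparts, norm_neg]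
    _ ≤ ∫ x, K * (‖x - x₀‖ ^ κ * φ ‖x - x₀‖) ∂μ := norm_integral_le_of_norm_le hradial hb_le
    _ = _ := by
        rw [integral_const_mul, integral_fun_norm_sub_addHaar (fun y ↦ y ^ κ * φ y), mul_comm]

lemma norm_integral_smul_fderiv_le_setIntegral_rpow {q : E → ℝ} {f : E → F} {x₀ : E}
    {κ K M : ℝ} {j : ℕ} {s : Set ℝ} (hs : MeasurableSet s)
    (hq : DifferentiableOn ℝ q {x₀}ᶜ) (hf : Differentiable ℝ f)
    (hfK : ∀ x, ‖f x - f x₀‖ ≤ K * ‖x - x₀‖ ^ κ)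
    (hqf : Integrable (fun x ↦ q x • fderiv ℝ f x) μ)
    (hq'M : ∀ x ≠ x₀, ‖x - x₀‖ ∈ s → ‖fderiv ℝ q x‖ ≤ M / ‖x - x₀‖ ^ (finrank ℝ E + j))
    (hq's : ∀ x, ‖x - x₀‖ ∉ s → fderiv ℝ q x = 0)
    (hint : IntegrableOn (fun y : ℝ ↦ y ^ (κ - 1 - j)) (Ioi 0 ∩ s))
    (hzero : Tendsto (fun x ↦ ‖x - x₀‖ ^ (finrank ℝ E - 1) * (‖q x‖ * ‖x - x₀‖ ^ κ))
      (𝓝[≠] x₀) (𝓝 0))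
    (hinfty : Tendsto (fun x ↦ ‖x - x₀‖ ^ (finrank ℝ E - 1) * (‖q x‖ * ‖x - x₀‖ ^ κ))
      (Bornology.cobounded E) (𝓝 0)) :
    ‖∫ x, q x • fderiv ℝ f x ∂μ‖ ≤ finrank ℝ E * μ.real (ball 0 1) *
      (M * ∫ y in Ioi 0 ∩ s, y ^ (κ - 1 - j)) * K := by
  set φ : ℝ → ℝ := s.indicator fun y ↦ M / y ^ (finrank ℝ E + j)
  have hweight : EqOn (fun y ↦ y ^ (finrank ℝ E - 1) * (y ^ κ * φ y))
      (s.indicator fun y ↦ M * y ^ (κ - 1 - j)) (Ioi 0) := by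
    intro y (hy : 0 < y)
    by_cases hys : y ∈ s
    · simp only [φ, indicator_of_mem hys]
      rw [Real.rpow_sub_natCast hy.ne', Real.rpow_sub_one hy.ne', pow_add,
        ← pow_sub_one_mul finrank_pos.ne' y]
      field_simp
    · simp only [φ, indicator_of_notMem hys, mul_zero]
  have hφ : IntegrableOn (fun y ↦ y ^ (finrank ℝ E - 1) * (y ^ κ * φ y)) (Ioi 0) := by
    rw [integrableOn_congr_fun hweight measurableSet_Ioi, integrableOn_indicator_iff hs,
      inter_comm]
    exact hint.const_mul M
  have hφ_integral : ∫ y in Ioi 0, y ^ (finrank ℝ E - 1) * (y ^ κ * φ y) =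
      M * ∫ y in Ioi 0 ∩ s, y ^ (κ - 1 - j) := by
    rw [setIntegral_congr_fun measurableSet_Ioi hweight, setIntegral_indicator hs,
      integral_const_mul]
  rw [← hφ_integral]
  refine norm_integral_smul_fderiv_le hq hf hfK hqf (fun x hx ↦ ?_) hφ hzero hinfty
  by_cases hxs : ‖x - x₀‖ ∈ s
  · simpa only [φ, indicator_of_mem hxs] using hq'M x hx hxs
  · simp only [φ, indicator_of_notMem hxs, hq's x hxs, norm_zero, le_refl]

lemma norm_integral_smul_fderiv_le_of_eq_zero_far {q : E → ℝ} {f : E → F} {x₀ : E} {κ K M ρ : ℝ}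
    (hκ : 0 < κ) (hρ : 0 < ρ) (hq : DifferentiableOn ℝ q {x₀}ᶜ)
    (hqM : ∀ x ≠ x₀, ‖q x‖ ≤ M / ‖x - x₀‖ ^ (finrank ℝ E - 1))
    (hq'M : ∀ x ≠ x₀, ‖fderiv ℝ q x‖ ≤ M / ‖x - x₀‖ ^ finrank ℝ E)
    (hq_far : ∀ x, ρ < ‖x - x₀‖ → q x = 0)
    (hf : ContDiff ℝ 1 f) (hf' : HasCompactSupport f)
    (hfK : ∀ x, ‖f x - f x₀‖ ≤ K * ‖x - x₀‖ ^ κ) :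
    ‖∫ x, q x • fderiv ℝ f x ∂μ‖ ≤
      finrank ℝ E * μ.real (ball 0 1) * (M * (ρ ^ κ / κ)) * K := by
  have hq'_far (x : E) (hx : ‖x - x₀‖ ∉ Iic ρ) : fderiv ℝ q x = 0 := by
    have h : q =ᶠ[𝓝 x] 0 := by
      have hcont : ContinuousAt (fun y ↦ ‖y - x₀‖) x := by fun_prop
      exact (hcont.eventually_const_lt (not_le.1 hx)).mono hq_far
    rw [h.fderiv_eq, Pi.zero_def, fderiv_fun_const, Pi.zero_apply]
  have hzero : Tendsto (fun x ↦ ‖x - x₀‖ ^ (finrank ℝ E - 1) * (‖q x‖ * ‖x - x₀‖ ^ κ))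
      (𝓝[≠] x₀) (𝓝 0) := by
    refine tendsto_pow_mul_norm_mul_rpow (j := 0) eventually_mem_nhdsWithin
      (eventually_mem_nhdsWithin.mono hqM) ?_
    have hcont : ContinuousAt (fun x ↦ ‖x - x₀‖ ^ κ) x₀ :=
      (by fun_prop : ContinuousAt (fun x ↦ ‖x - x₀‖) x₀).rpow_const (.inr hκ.le)
    simpa [ContinuousAt, Real.zero_rpow hκ.ne'] using hcont.tendsto.mono_left nhdsWithin_le_nhds
  have hinfty : Tendsto (fun x ↦ ‖x - x₀‖ ^ (finrank ℝ E - 1) * (‖q x‖ * ‖x - x₀‖ ^ κ))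
      (Bornology.cobounded E) (𝓝 0) := by
    refine tendsto_const_nhds.congr' ?_
    filter_upwards [(tendsto_norm_sub_cobounded_atTop x₀).eventually_gt_atTop ρ] with x hx
    simp [hq_far x hx]
  have hmain := norm_integral_smul_fderiv_le_setIntegral_rpow (μ := μ) (j := 0)
    (measurableSet_Iic (a := ρ)) hq (hf.differentiable one_ne_zero) hfK
    (integrable_smul_of_norm_le_div_pow hq.continuousOn hqM (hf.continuous_fderiv one_ne_zero)
      (hf'.fderiv ℝ)) (fun x hx _ ↦ hq'M x hx) hq'_far ?_ hzero hinfty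
  · simpa [Ioi_inter_Iic, ← intervalIntegral.integral_of_le hρ.le,
      integral_rpow (Or.inl (by linarith : (-1 : ℝ) < κ - 1)), Real.zero_rpow hκ.ne'] using hmain
  · rw [Ioi_inter_Iic, integrableOn_Ioc_iff_integrableOn_Ioo,
      intervalIntegral.integrableOn_Ioo_rpow_iff hρ]
    simpa using hκ

lemma norm_integral_smul_fderiv_le_of_eq_zero_near {q : E → ℝ} {f : E → F} {x₀ : E}
    {κ K M ρ : ℝ} (hκ : κ < 1) (hρ : 0 < ρ) (hq : Differentiable ℝ q)
    (hqM : ∀ x, ρ ≤ ‖x - x₀‖ → ‖q x‖ ≤ M / ‖x - x₀‖ ^ finrank ℝ E)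
    (hq'M : ∀ x, ρ ≤ ‖x - x₀‖ → ‖fderiv ℝ q x‖ ≤ M / ‖x - x₀‖ ^ (finrank ℝ E + 1))
    (hq_near : ∀ x, ‖x - x₀‖ < ρ → q x = 0)
    (hf : ContDiff ℝ 1 f) (hf' : HasCompactSupport f)
    (hfK : ∀ x, ‖f x - f x₀‖ ≤ K * ‖x - x₀‖ ^ κ) :
    ‖∫ x, q x • fderiv ℝ f x ∂μ‖ ≤
      finrank ℝ E * μ.real (ball 0 1) * (M * (ρ ^ (κ - 1) / (1 - κ))) * K := by
  have hinter : Ioi 0 ∩ Ici ρ = Ici ρ := inter_eq_right.2 fun y hy ↦ hρ.trans_le hy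
  have hq'_near (x : E) (hx : ‖x - x₀‖ ∉ Ici ρ) : fderiv ℝ q x = 0 := by
    have h : q =ᶠ[𝓝 x] 0 := by
      have hcont : ContinuousAt (fun y ↦ ‖y - x₀‖) x := by fun_prop
      exact (hcont.eventually_lt_const (not_le.1 hx)).mono hq_near
    rw [h.fderiv_eq, Pi.zero_def, fderiv_fun_const, Pi.zero_apply]
  have hzero : Tendsto (fun x ↦ ‖x - x₀‖ ^ (finrank ℝ E - 1) * (‖q x‖ * ‖x - x₀‖ ^ κ))
      (𝓝[≠] x₀) (𝓝 0) := by
    refine tendsto_const_nhds.congr' ?_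
    filter_upwards [mem_nhdsWithin_of_mem_nhds (ball_mem_nhds x₀ hρ)] with x hx
    simp [hq_near x (mem_ball_iff_norm.1 hx)]
  have hinfty : Tendsto (fun x ↦ ‖x - x₀‖ ^ (finrank ℝ E - 1) * (‖q x‖ * ‖x - x₀‖ ^ κ))
      (Bornology.cobounded E) (𝓝 0) := by
    have hdist := tendsto_norm_sub_cobounded_atTop x₀
    refine tendsto_pow_mul_norm_mul_rpow (M := M) (j := 1)
      ((hdist.eventually_gt_atTop 0).mono fun x ↦ norm_sub_pos_iff.1) ?_ ?_
    · rw [Nat.sub_add_cancel finrank_pos]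
      exact (hdist.eventually_ge_atTop ρ).mono hqM
    · simpa [Function.comp_def] using (tendsto_rpow_neg_atTop (sub_pos.2 hκ)).comp hdist
  have hmain := norm_integral_smul_fderiv_le_setIntegral_rpow (μ := μ) (j := 1)
    (measurableSet_Ici (a := ρ)) hq.differentiableOn (hf.differentiable one_ne_zero) hfK
    ((hq.continuous.locallyIntegrable).integrable_smul_right_of_hasCompactSupport
      (hf.continuous_fderiv one_ne_zero) (hf'.fderiv ℝ)) (fun x _ ↦ hq'M x) hq'_near ?_ hzero hinfty
  · have hrpow := integral_Ioi_rpow_of_lt (by linarith : κ - 1 - 1 < -1) hρ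
    rw [sub_add_cancel, ← neg_div_neg_eq, neg_neg, neg_sub] at hrpow
    rwa [hinter, integral_Ici_eq_integral_Ioi, Nat.cast_one,
      hrpow] at hmain
  · rw [hinter, integrableOn_Ici_iff_integrableOn_Ioi]
    exact integrableOn_Ioi_rpow_of_lt (by push_cast; linarith) hρ

end Radial

section Cutoff

lemma norm_mul_le_div_pow {a b d L M : ℝ} {m : ℕ} (ha : ‖a‖ ≤ 1) (hL : 0 ≤ L)
    (hb : ‖b‖ ≤ M / d ^ m) : ‖a * b‖ ≤ (1 + L) * M / d ^ m := by
  have h : 0 ≤ M / d ^ m := (norm_nonneg b).trans hb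
  calc ‖a * b‖ ≤ 1 * (M / d ^ m) := by
        rw [norm_mul]
        gcongr
    _ ≤ (1 + L) * (M / d ^ m) := by
        gcongr
        linarith
    _ = (1 + L) * M / d ^ m := mul_div_assoc' ..

lemma norm_fderiv_mul_le_div_pow {E : Type*} [NormedAddCommGroup E] [NormedSpace ℝ E]
    {χ q : E → ℝ} {x : E} {d L M : ℝ} {m : ℕ} (hd : 0 < d) (hχ : DifferentiableAt ℝ χ x)
    (hχ1 : ‖χ x‖ ≤ 1) (hχL : ‖fderiv ℝ χ x‖ ≤ L / d) (hq : DifferentiableAt ℝ q x)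
    (hqM : ‖q x‖ ≤ M / d ^ m) (hq'M : ‖fderiv ℝ q x‖ ≤ M / d ^ (m + 1)) :
    ‖fderiv ℝ (fun y ↦ χ y * q y) x‖ ≤ (1 + L) * M / d ^ (m + 1) := by
  rw [fderiv_fun_mul hχ hq]
  calc ‖χ x • fderiv ℝ q x + q x • fderiv ℝ χ x‖
      ≤ ‖χ x‖ * ‖fderiv ℝ q x‖ + ‖q x‖ * ‖fderiv ℝ χ x‖ := by
        simpa only [norm_smul] using norm_add_le (χ x • fderiv ℝ q x) (q x • fderiv ℝ χ x)
    _ ≤ 1 * (M / d ^ (m + 1)) + M / d ^ m * (L / d) := by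
        gcongr
        exact (norm_nonneg _).trans hqM
    _ = (1 + L) * M / d ^ (m + 1) := by
        rw [pow_succ]
        field_simp

variable {E F : Type*} [NormedAddCommGroup E] [NormedSpace ℝ E] [FiniteDimensional ℝ E]
  [MeasurableSpace E] [BorelSpace E] {μ : Measure E} [NormedAddCommGroup F] [NormedSpace ℝ F]

lemma integral_sub_integral_eq_dyadicBump {g g' : E → F} (hg : Integrable g μ)
    (hg' : Integrable g' μ) (x₀ : E) {ρ : ℝ} (hρ : 0 < ρ) :
    ∫ x, g x ∂μ - ∫ x, g' x ∂μ =
      ∫ x, dyadicBump x₀ hρ x • g x ∂μ - ∫ x, dyadicBump x₀ hρ x • g' x ∂μ +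
        ∫ x, (1 - dyadicBump x₀ hρ x) • (g x - g' x) ∂μ := by
  have hψg := integrable_dyadicBump_smul hg x₀ hρ
  have hψg' := integrable_dyadicBump_smul hg' x₀ hρ
  have hsplit (x : E) : (1 - dyadicBump x₀ hρ x) • (g x - g' x) =
      (g x - g' x) - (dyadicBump x₀ hρ x • g x - dyadicBump x₀ hρ x • g' x) := by module
  have hsub := integral_sub (hg.sub hg') (hψg.sub hψg')
  simp only [Pi.sub_apply, integral_sub hg hg', integral_sub hψg hψg'] at hsub
  simp only [hsplit, hsub, add_sub_cancel]

variable [Nontrivial E] [μ.IsAddHaarMeasure]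

lemma norm_integral_cutoff_mul_smul_fderiv_le {χ q : E → ℝ} {f : E → F} {x₀ : E}
    {κ K L M ρ : ℝ} (hκ : 0 < κ) (hρ : 0 < ρ) (hχ : Differentiable ℝ χ) (hχ1 : ∀ x, ‖χ x‖ ≤ 1)
    (hχL : ∀ x ≠ x₀, ‖fderiv ℝ χ x‖ ≤ L / ‖x - x₀‖) (hχ_far : ∀ x, ρ < ‖x - x₀‖ → χ x = 0)
    (hL : 0 ≤ L) (hq : DifferentiableOn ℝ q {x₀}ᶜ)
    (hqM : ∀ x ≠ x₀, ‖q x‖ ≤ M / ‖x - x₀‖ ^ (finrank ℝ E - 1))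
    (hq'M : ∀ x ≠ x₀, ‖fderiv ℝ q x‖ ≤ M / ‖x - x₀‖ ^ finrank ℝ E)
    (hf : ContDiff ℝ 1 f) (hf' : HasCompactSupport f)
    (hfK : ∀ x, ‖f x - f x₀‖ ≤ K * ‖x - x₀‖ ^ κ) :
    ‖∫ x, (χ x * q x) • fderiv ℝ f x ∂μ‖ ≤
      finrank ℝ E * μ.real (ball 0 1) * ((1 + L) * M * (ρ ^ κ / κ)) * K := by
  refine norm_integral_smul_fderiv_le_of_eq_zero_far hκ hρ (hχ.differentiableOn.mul hq)
    (fun x hx ↦ ?_) (fun x hx ↦ ?_) (fun x hx ↦ by rw [hχ_far x hx, zero_mul]) hf hf' hfK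
  · exact norm_mul_le_div_pow (hχ1 x) hL (hqM x hx)
  · have hn := Nat.sub_add_cancel (finrank_pos (R := ℝ) (M := E))
    rw [← hn] at hq'M ⊢
    exact norm_fderiv_mul_le_div_pow (norm_sub_pos_iff.2 hx) (hχ x) (hχ1 x) (hχL x hx)
      (hq.differentiableAt (isOpen_compl_singleton.mem_nhds hx)) (hqM x hx) (hq'M x hx)

lemma norm_integral_one_sub_dyadicBump_mul_smul_fderiv_le {q : E → ℝ} {f : E → F} {x₀ : E}
    {κ K L M ρ : ℝ} (hκ : κ < 1) (hρ : 0 < ρ)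
    (hL : ∀ x, ‖fderiv ℝ (dyadicBump x₀ hρ) x‖ ≤ L / ‖x - x₀‖) (hL₀ : 0 ≤ L)
    (hq : ∀ x, ρ ≤ ‖x - x₀‖ → DifferentiableAt ℝ q x)
    (hqM : ∀ x, ρ ≤ ‖x - x₀‖ → ‖q x‖ ≤ M / ‖x - x₀‖ ^ finrank ℝ E)
    (hq'M : ∀ x, ρ ≤ ‖x - x₀‖ → ‖fderiv ℝ q x‖ ≤ M / ‖x - x₀‖ ^ (finrank ℝ E + 1))
    (hf : ContDiff ℝ 1 f) (hf' : HasCompactSupport f)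
    (hfK : ∀ x, ‖f x - f x₀‖ ≤ K * ‖x - x₀‖ ^ κ) :
    ‖∫ x, ((1 - dyadicBump x₀ hρ x) * q x) • fderiv ℝ f x ∂μ‖ ≤
      finrank ℝ E * μ.real (ball 0 1) * ((1 + L) * M * (ρ ^ (κ - 1) / (1 - κ))) * K := by
  have hρ_near {x : E} (hx : ‖x - x₀‖ < ρ) :
      (fun y ↦ (1 - dyadicBump x₀ hρ y) * q y) =ᶠ[𝓝 x] fun _ ↦ 0 :=
    (dyadicBump_eventuallyEq_one hρ hx).mono fun y hy ↦ by simp [hy]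
  have hχ (x : E) : DifferentiableAt ℝ (fun y ↦ 1 - dyadicBump x₀ hρ y) x :=
    ((dyadicBump x₀ hρ).contDiff.differentiable one_ne_zero x).const_sub 1
  have hχ1 (x : E) : ‖1 - dyadicBump x₀ hρ x‖ ≤ 1 := by
    rw [Real.norm_of_nonneg (sub_nonneg.2 (ContDiffBump.le_one _))]
    exact sub_le_self 1 (ContDiffBump.nonneg _)
  have hχL (x : E) : ‖fderiv ℝ (fun y ↦ 1 - dyadicBump x₀ hρ y) x‖ ≤ L / ‖x - x₀‖ := by
    rw [fderiv_const_sub, norm_neg]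
    exact hL x
  refine norm_integral_smul_fderiv_le_of_eq_zero_near hκ hρ (fun x ↦ ?_)
    (fun x hx ↦ norm_mul_le_div_pow (hχ1 x) hL₀ (hqM x hx))
    (fun x hx ↦ norm_fderiv_mul_le_div_pow (hρ.trans_le hx) (hχ x) (hχ1 x) (hχL x) (hq x hx)
      (hqM x hx) (hq'M x hx))
    (fun x hx ↦ (hρ_near hx).self_of_nhds) hf hf' hfK
  rcases lt_or_ge ‖x - x₀‖ ρ with hx | hx
  · exact (differentiableAt_const 0).congr_of_eventuallyEq (hρ_near hx)
  · exact (hχ x).mul (hq x hx)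

end Cutoff

section MeanValue

lemma norm_sub_le_of_norm_fderiv_le_div_pow {E F : Type*} [NormedAddCommGroup E]
    [NormedSpace ℝ E] [NormedAddCommGroup F] [NormedSpace ℝ F] {g : E → F} {η θ θ' : E} {C : ℝ}
    {m : ℕ} (hg : DifferentiableOn ℝ g {η}ᶜ)
    (hg' : ∀ x, x ≠ η → ‖fderiv ℝ g x‖ ≤ C / ‖x - η‖ ^ m) (hθ : θ ≠ η)
    (hθ' : 2 * ‖θ - θ'‖ ≤ ‖θ - η‖) :
    ‖g θ - g θ'‖ ≤ 2 ^ m * C * ‖θ - θ'‖ / ‖θ - η‖ ^ m := by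
  have hpos : 0 < ‖θ - η‖ := norm_sub_pos_iff.2 hθ
  have hC : 0 ≤ C := by
    simpa only [zero_mul] using
      (le_div_iff₀ (by positivity)).1 ((norm_nonneg _).trans (hg' θ hθ))
  have hfar {x : E} (hx : x ∈ closedBall θ ‖θ - θ'‖) : ‖θ - η‖ / 2 ≤ ‖x - η‖ := by
    have := norm_sub_le_norm_sub_add_norm_sub θ x η
    rw [mem_closedBall_iff_norm'] at hx
    linarith
  have hne {x : E} (hx : x ∈ closedBall θ ‖θ - θ'‖) : x ≠ η :=
    norm_sub_pos_iff.1 ((half_pos hpos).trans_le (hfar hx))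
  calc ‖g θ - g θ'‖ ≤ C / (‖θ - η‖ / 2) ^ m * ‖θ - θ'‖ := by
        refine (convex_closedBall θ ‖θ - θ'‖).norm_image_sub_le_of_norm_fderiv_le (𝕜 := ℝ)
          (fun x hx ↦ hg.differentiableAt (isOpen_compl_singleton.mem_nhds (hne hx)))
          (fun x hx ↦ (hg' x (hne hx)).trans ?_) (mem_closedBall_iff_norm'.2 le_rfl)
          (mem_closedBall_self (norm_nonneg _))
        gcongr
        exact hfar hx
    _ = 2 ^ m * C * ‖θ - θ'‖ / ‖θ - η‖ ^ m := by
        rw [div_pow]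
        field_simp

end MeanValue

section SingularKernel

variable {E : Type*} [NormedAddCommGroup E] [NormedSpace ℝ E]

/-- Size and smoothness conditions of Calderón–Zygmund type, with constant `C`, on a kernel
`G θ η` that is singular on the diagonal. The singularity is of order `finrank ℝ E - 1`, one less
than the critical order, because `G` is to be integrated against a derivative; the mixed derivative
is encoded as the derivative in `θ` of the derivative in `η`. -/
structure IsSingularKernel (C : ℝ) (G : E → E → ℝ) : Prop where
  differentiableOn_left (η : E) : DifferentiableOn ℝ (fun θ ↦ G θ η) {η}ᶜ
  differentiableOn_right (θ : E) : DifferentiableOn ℝ (G θ) {θ}ᶜ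
  differentiableOn_fderiv_right (η : E) : DifferentiableOn ℝ (fun θ ↦ fderiv ℝ (G θ) η) {η}ᶜ
  bound (θ η : E) (h : θ ≠ η) :
    |G θ η| + ‖θ - η‖ * (‖fderiv ℝ (fun θ' ↦ G θ' η) θ‖ + ‖fderiv ℝ (G θ) η‖) +
      ‖θ - η‖ ^ 2 * ‖fderiv ℝ (fun θ' ↦ fderiv ℝ (G θ') η) θ‖ ≤ C / ‖θ - η‖ ^ (finrank ℝ E - 1)

namespace IsSingularKernel

variable {C : ℝ} {G : E → E → ℝ} {θ θ' η : E}

lemma norm_le (hG : IsSingularKernel C G) (h : θ ≠ η) :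
    ‖G θ η‖ ≤ C / ‖θ - η‖ ^ (finrank ℝ E - 1) := by
  refine le_trans ?_ (hG.bound θ η h)
  rw [Real.norm_eq_abs, add_assoc]
  exact le_add_of_nonneg_right (by positivity)

lemma nonneg (hG : IsSingularKernel C G) (h : θ ≠ η) : 0 ≤ C := by
  have hpos : 0 < ‖θ - η‖ := norm_sub_pos_iff.2 h
  simpa only [zero_mul] using
    (le_div_iff₀ (by positivity)).1 ((norm_nonneg _).trans (hG.norm_le h))

variable [FiniteDimensional ℝ E] [Nontrivial E]

lemma norm_fderiv_add_norm_fderiv_le (hG : IsSingularKernel C G) (h : θ ≠ η) :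
    ‖fderiv ℝ (fun θ' ↦ G θ' η) θ‖ + ‖fderiv ℝ (G θ) η‖ ≤ C / ‖θ - η‖ ^ finrank ℝ E := by
  have hpos : 0 < ‖θ - η‖ := norm_sub_pos_iff.2 h
  rw [← pow_sub_one_mul finrank_pos.ne' ‖θ - η‖, ← div_div, le_div_iff₀' hpos]
  refine le_trans ?_ (hG.bound θ η h)
  have : 0 ≤ ‖θ - η‖ ^ 2 * ‖fderiv ℝ (fun θ' ↦ fderiv ℝ (G θ') η) θ‖ := by positivity
  linarith [abs_nonneg (G θ η)]

lemma norm_fderiv_left_le (hG : IsSingularKernel C G) (h : θ ≠ η) :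
    ‖fderiv ℝ (fun θ' ↦ G θ' η) θ‖ ≤ C / ‖θ - η‖ ^ finrank ℝ E :=
  (le_add_of_nonneg_right (norm_nonneg _)).trans (hG.norm_fderiv_add_norm_fderiv_le h)

lemma norm_fderiv_right_le (hG : IsSingularKernel C G) (h : θ ≠ η) :
    ‖fderiv ℝ (G θ) η‖ ≤ C / ‖θ - η‖ ^ finrank ℝ E :=
  (le_add_of_nonneg_left (norm_nonneg _)).trans (hG.norm_fderiv_add_norm_fderiv_le h)

lemma norm_fderiv_fderiv_le (hG : IsSingularKernel C G) (h : θ ≠ η) :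
    ‖fderiv ℝ (fun θ' ↦ fderiv ℝ (G θ') η) θ‖ ≤ C / ‖θ - η‖ ^ (finrank ℝ E + 1) := by
  have hpos : 0 < ‖θ - η‖ := norm_sub_pos_iff.2 h
  rw [← Nat.sub_add_cancel (finrank_pos (R := ℝ) (M := E)), add_assoc, pow_add, ← div_div,
    le_div_iff₀' (by positivity)]
  refine le_trans ?_ (hG.bound θ η h)
  exact le_add_of_nonneg_left (by positivity)

lemma norm_sub_le (hG : IsSingularKernel C G) (h : θ ≠ η) (h' : 2 * ‖θ - θ'‖ ≤ ‖θ - η‖) :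
    ‖G θ η - G θ' η‖ ≤ 2 ^ finrank ℝ E * C * ‖θ - θ'‖ / ‖θ - η‖ ^ finrank ℝ E :=
  norm_sub_le_of_norm_fderiv_le_div_pow (hG.differentiableOn_left η)
    (fun _ ↦ hG.norm_fderiv_left_le) h h'

lemma norm_fderiv_sub_le (hG : IsSingularKernel C G) (h : θ ≠ η)
    (h' : 2 * ‖θ - θ'‖ ≤ ‖θ - η‖) :
    ‖fderiv ℝ (G θ) η - fderiv ℝ (G θ') η‖ ≤
      2 ^ (finrank ℝ E + 1) * C * ‖θ - θ'‖ / ‖θ - η‖ ^ (finrank ℝ E + 1) :=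
  norm_sub_le_of_norm_fderiv_le_div_pow (hG.differentiableOn_fderiv_right η)
    (fun _ ↦ hG.norm_fderiv_fderiv_le) h h'

variable [MeasurableSpace E] [BorelSpace E]
  {μ : Measure E} [μ.IsAddHaarMeasure] {F : Type*} [NormedAddCommGroup F] [NormedSpace ℝ F]
  {C κ K L : ℝ} {G : E → E → ℝ} {f : E → F} {θ θ' : E}

lemma integrable_smul_fderiv (hG : IsSingularKernel C G) (hf : ContDiff ℝ 1 f)
    (hf' : HasCompactSupport f) : Integrable (fun η ↦ G θ η • fderiv ℝ f η) μ :=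
  integrable_smul_of_norm_le_div_pow (hG.differentiableOn_right θ).continuousOn
    (fun η hη ↦ norm_sub_rev θ η ▸ hG.norm_le hη.symm) (hf.continuous_fderiv one_ne_zero)
    (hf'.fderiv ℝ)

lemma norm_integral_dyadicBump_mul_smul_fderiv_le (hG : IsSingularKernel C G) (hκ : 0 < κ)
    {c : E} {ρ : ℝ} (hρ : 0 < ρ) (hL : ∀ x, ‖fderiv ℝ (dyadicBump c hρ) x‖ ≤ L / ‖x - c‖)
    (hL₀ : 0 ≤ L) (hθ : ‖θ - c‖ ≤ ρ) (hf : ContDiff ℝ 1 f) (hf' : HasCompactSupport f)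
    (hfK : ∀ x, ‖f x - f θ‖ ≤ K * ‖x - θ‖ ^ κ) :
    ‖∫ η, (dyadicBump c hρ η * G θ η) • fderiv ℝ f η ∂μ‖ ≤
      finrank ℝ E * μ.real (ball 0 1) * ((1 + 2 * L) * C * ((3 * ρ) ^ κ / κ)) * K := by
  refine norm_integral_cutoff_mul_smul_fderiv_le hκ (by positivity)
    ((dyadicBump c hρ).contDiff.differentiable one_ne_zero)
    (fun x ↦ norm_dyadicBump_le_one c x hρ)
    (fun x ↦ norm_fderiv_dyadicBump_le_of_norm_sub_le hρ (hL x) hL₀ hθ)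
    (fun x hx ↦ dyadicBump_eq_zero hρ ?_) (by positivity) (hG.differentiableOn_right θ)
    (fun η hη ↦ norm_sub_rev θ η ▸ hG.norm_le hη.symm)
    (fun η hη ↦ norm_sub_rev θ η ▸ hG.norm_fderiv_right_le hη.symm) hf hf' hfK
  have := norm_sub_le_norm_sub_add_norm_sub x c θ
  rw [norm_sub_rev] at hθ
  linarith

lemma norm_integral_one_sub_dyadicBump_mul_sub_smul_fderiv_le (hG : IsSingularKernel C G)
    (hκ : κ < 1) {ρ : ℝ} (hρ : 0 < ρ)
    (hL : ∀ x, ‖fderiv ℝ (dyadicBump θ hρ) x‖ ≤ L / ‖x - θ‖) (hL₀ : 0 ≤ L)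
    (hθ' : 2 * ‖θ - θ'‖ ≤ ρ) (hf : ContDiff ℝ 1 f) (hf' : HasCompactSupport f)
    (hfK : ∀ x, ‖f x - f θ‖ ≤ K * ‖x - θ‖ ^ κ) :
    ‖∫ η, ((1 - dyadicBump θ hρ η) * (G θ η - G θ' η)) • fderiv ℝ f η ∂μ‖ ≤
      finrank ℝ E * μ.real (ball 0 1) * ((1 + L) * (2 ^ (finrank ℝ E + 1) * C * ‖θ - θ'‖) *
        (ρ ^ (κ - 1) / (1 - κ))) * K := by
  have hne {η : E} (hη : ρ ≤ ‖η - θ‖) : θ ≠ η :=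
    (norm_sub_pos_iff.1 (hρ.trans_le hη)).symm
  have hne' {η : E} (hη : ρ ≤ ‖η - θ‖) : θ' ≠ η := by
    rintro rfl
    rw [norm_sub_rev] at hη
    linarith
  have hfar {η : E} (hη : ρ ≤ ‖η - θ‖) : 2 * ‖θ - θ'‖ ≤ ‖θ - η‖ :=
    hθ'.trans (norm_sub_rev η θ ▸ hη)
  have hdiff {η : E} (hη : ρ ≤ ‖η - θ‖) : DifferentiableAt ℝ (G θ) η :=
    (hG.differentiableOn_right θ).differentiableAt
      (isOpen_compl_singleton.mem_nhds (hne hη).symm)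
  have hdiff' {η : E} (hη : ρ ≤ ‖η - θ‖) : DifferentiableAt ℝ (G θ') η :=
    (hG.differentiableOn_right θ').differentiableAt
      (isOpen_compl_singleton.mem_nhds (hne' hη).symm)
  refine norm_integral_one_sub_dyadicBump_mul_smul_fderiv_le hκ hρ hL hL₀
    (fun η hη ↦ (hdiff hη).sub (hdiff' hη)) (fun η hη ↦ ?_) (fun η hη ↦ ?_) hf hf' hfK
  · have hC : 0 ≤ C := hG.nonneg (hne hη)
    rw [norm_sub_rev η θ]
    refine (hG.norm_sub_le (hne hη) (hfar hη)).trans ?_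
    gcongr
    · exact one_le_two
    · exact Nat.le_succ _
  · rw [norm_sub_rev η θ, fderiv_fun_sub (hdiff hη) (hdiff' hη)]
    exact hG.norm_fderiv_sub_le (hne hη) (hfar hη)

variable (μ F) in
lemma exists_norm_integral_smul_fderiv_sub_le (hκ : κ ∈ Ioo (0 : ℝ) 1) :
    ∃ A : ℝ, 0 < A ∧ ∀ {C : ℝ} {G : E → E → ℝ}, IsSingularKernel C G →
      ∀ {f : E → F}, ContDiff ℝ 1 f → HasCompactSupport f →
      ∀ {K : ℝ}, (∀ x y, ‖f x - f y‖ ≤ K * ‖x - y‖ ^ κ) → ∀ θ θ' : E,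
        ‖∫ η, G θ η • fderiv ℝ f η ∂μ - ∫ η, G θ' η • fderiv ℝ f η ∂μ‖ ≤
          A * C * K * ‖θ - θ'‖ ^ κ := by
  obtain ⟨hκ₀, hκ₁⟩ := hκ
  obtain ⟨L, hL₀, hL⟩ := exists_norm_fderiv_dyadicBump_le E
  have : 0 < 1 - κ := sub_pos.2 hκ₁
  have hn : 0 < finrank ℝ E := finrank_pos
  have hball : 0 < μ.real (ball (0 : E) 1) := 
    ENNReal.toReal_pos (measure_ball_pos μ 0 one_pos).ne' measure_ball_lt_top.ne
  refine ⟨finrank ℝ E * μ.real (ball (0 : E) 1) * (2 * (1 + 2 * L) * 3 ^ κ / κ +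
    (1 + L) * 2 ^ finrank ℝ E / (1 - κ)) * 2 ^ κ, by positivity, ?_⟩
  intro C G hG f hf hf' K hfK θ θ'
  rcases eq_or_ne θ θ' with rfl | hne
  · simp [Real.zero_rpow hκ₀.ne']
  have hr : 0 < ‖θ - θ'‖ := norm_sub_pos_iff.2 hne
  have hρ : 0 < 2 * ‖θ - θ'‖ := by positivity
  have near := hG.norm_integral_dyadicBump_mul_smul_fderiv_le (μ := μ) (θ := θ) hκ₀ hρ
    (hL θ hρ) hL₀.le (by simp) hf hf' (hfK · θ)
  have near' := hG.norm_integral_dyadicBump_mul_smul_fderiv_le (μ := μ) (θ := θ') hκ₀ hρ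
    (hL θ hρ) hL₀.le (by rw [norm_sub_rev]; linarith) hf hf' (hfK · θ')
  have far := hG.norm_integral_one_sub_dyadicBump_mul_sub_smul_fderiv_le (μ := μ) hκ₁ hρ
    (hL θ hρ) hL₀.le le_rfl hf hf' (hfK · θ)
  rw [integral_sub_integral_eq_dyadicBump (hG.integrable_smul_fderiv hf hf')
    (hG.integrable_smul_fderiv hf hf') θ hρ]
  simp only [← sub_smul, smul_smul]
  refine (norm_add_le_of_le (norm_sub_le_of_le near near') far).trans_eq ?_
  rw [Real.rpow_sub_one hρ.ne', Real.mul_rpow zero_le_three hρ.le,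
    Real.mul_rpow zero_le_two hr.le]
  field_simp
  ring

end IsSingularKernel

end SingularKernel

section VectorField

variable {E : Type*} [NormedAddCommGroup E] [NormedSpace ℝ E]

/-- The divergence of a vector field, as the trace of its derivative; it is independent of any
choice of basis or inner product. -/
noncomputable def divergence (f : E → E) (x : E) : ℝ := LinearMap.trace ℝ E (fderiv ℝ f x)

lemma divergence_euclideanSpace {ι : Type*} [Fintype ι] [DecidableEq ι]
    (f : EuclideanSpace ℝ ι → EuclideanSpace ℝ ι) (x : EuclideanSpace ℝ ι) :
    divergence f x = ∑ i, fderiv ℝ f x (EuclideanSpace.single i 1) i := by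
  simp [divergence, LinearMap.trace_eq_sum_inner _ (EuclideanSpace.basisFun ι ℝ),
    EuclideanSpace.inner_single_left]

variable [FiniteDimensional ℝ E] [Nontrivial E] [MeasurableSpace E] [BorelSpace E]

theorem singular_integral_holder_bound_general (μ : Measure E) [μ.IsAddHaarMeasure] {κ : ℝ}
    (hκ : κ ∈ Ioo (0 : ℝ) 1) :
    ∃ C : ℝ, 0 < C ∧ ∀ (CG : ℝ) (G : E → E → ℝ), IsSingularKernel CG G →
      ∀ f : E → E, ContDiff ℝ 1 f → HasCompactSupport f →
      ∀ K : ℝ, (∀ x y, ‖f x - f y‖ ≤ K * ‖x - y‖ ^ κ) → ∀ θ θ' : E,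
        |∫ η, G θ η * divergence f η ∂μ - ∫ η, G θ' η * divergence f η ∂μ| ≤
          C * CG * K * ‖θ - θ'‖ ^ κ := by
  obtain ⟨A, hA₀, hA⟩ := IsSingularKernel.exists_norm_integral_smul_fderiv_sub_le μ E hκ
  set T : (E →L[ℝ] E) →L[ℝ] ℝ :=
    LinearMap.toContinuousLinearMap (LinearMap.trace ℝ E ∘ₗ ContinuousLinearMap.coeLM ℝ)
  have hT (f : E → E) (x : E) : divergence f x = T (fderiv ℝ f x) := rfl
  refine ⟨(‖T‖ + 1) * A, by positivity, fun CG G hG f hf hf' K hK θ θ' ↦ ?_⟩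
  have hint (θ : E) : ∫ η, G θ η * divergence f η ∂μ = T (∫ η, G θ η • fderiv ℝ f η ∂μ) := by
    rw [← T.integral_comp_comm (hG.integrable_smul_fderiv hf hf')]
    simp only [map_smul, smul_eq_mul, hT]
  have hgrad := hA hG hf hf' hK θ θ'
  rw [hint, hint, ← map_sub, ← Real.norm_eq_abs]
  calc ‖T (∫ η, G θ η • fderiv ℝ f η ∂μ - ∫ η, G θ' η • fderiv ℝ f η ∂μ)‖
      ≤ (‖T‖ + 1) * (A * CG * K * ‖θ - θ'‖ ^ κ) :=
        T.le_of_opNorm_le_of_le (le_add_of_nonneg_right zero_le_one) hgrad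
    _ = (‖T‖ + 1) * A * CG * K * ‖θ - θ'‖ ^ κ := by ring

end VectorField

/-- Hölder bound `[𝓜f]_{Ċ^κ} ≲ C_G [f]_{Ċ^κ}` for the non-convolution
singular integral operator `𝓜f(θ) = ∫ G(θ,η) div f(η) dη` with a Calderón–Zygmund-type
kernel `G` on `ℝ²`. -/
theorem singular_integral_holder_bound
    (κ : ℝ) (hκ : κ ∈ Ioo (0 : ℝ) 1) :
    ∃ C : ℝ, 0 < C ∧
      ∀ (CG : ℝ) (G : EuclideanSpace ℝ (Fin 2) → EuclideanSpace ℝ (Fin 2) → ℝ),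
        0 ≤ CG →
        -- continuously differentiable in each variable, off the diagonal
        (∀ η, ContDiffOn ℝ 1 (fun θ => G θ η) {η}ᶜ) →
        (∀ θ, ContDiffOn ℝ 1 (fun η => G θ η) {θ}ᶜ) →
        (∀ η, DifferentiableOn ℝ
          (fun θ => fderiv ℝ (fun η' => G θ η') η) {η}ᶜ) →
        -- continuous mixed derivative ∇_θ∇_η G, off the diagonal
        ContinuousOn
          (fun p : EuclideanSpace ℝ (Fin 2) × EuclideanSpace ℝ (Fin 2) =>
            fderiv ℝ (fun θ => fderiv ℝ (fun η' => G θ η') p.2) p.1)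
          {p : EuclideanSpace ℝ (Fin 2) × EuclideanSpace ℝ (Fin 2) | p.1 ≠ p.2} →
        -- kernel bounds
        (∀ θ η, θ ≠ η →
          |G θ η| +
            ‖θ - η‖ * (‖fderiv ℝ (fun θ' => G θ' η) θ‖ + ‖fderiv ℝ (fun η' => G θ η') η‖) +
            ‖θ - η‖ ^ 2 * ‖fderiv ℝ (fun θ' => fderiv ℝ (fun η' => G θ' η') η) θ‖ ≤
          CG / ‖θ - η‖) →
        ∀ f : EuclideanSpace ℝ (Fin 2) → EuclideanSpace ℝ (Fin 2),
          ContDiff ℝ 1 f → HasCompactSupport f →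
          ∀ K : ℝ, (∀ x y, ‖f x - f y‖ ≤ K * ‖x - y‖ ^ κ) →
          ∀ θ θ' : EuclideanSpace ℝ (Fin 2),
            |(∫ η, G θ η * ∑ i, fderiv ℝ f η (EuclideanSpace.single i 1) i) -
                (∫ η, G θ' η * ∑ i, fderiv ℝ f η (EuclideanSpace.single i 1) i)| ≤
              C * CG * K * ‖θ - θ'‖ ^ κ := by
  obtain ⟨C, hC₀, hC⟩ :=
    singular_integral_holder_bound_general (E := EuclideanSpace ℝ (Fin 2)) volume hκ
  refine ⟨C, hC₀, fun CG G _ hleft hright hmixed _ hbound f hf hf' K hK θ θ' ↦ ?_⟩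
  have hG : IsSingularKernel CG G :=
    ⟨fun η ↦ (hleft η).differentiableOn one_ne_zero,
      fun θ ↦ (hright θ).differentiableOn one_ne_zero, hmixed,
      by simpa using hbound⟩
  simpa only [divergence_euclideanSpace] using hC CG G hG f hf hf' K hK θ θ'
end
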